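/- arXiv:1909.06193 — 4 statements merged into one kernel-verified Lean document; each statement's English description precedes it below -/
import Mathlib

section
/- (Lemma 1, cube version.) Given two Borel probability measures μ and ν supported on [0,π]^d with Fourier–Stieltjes transforms f_μ and f_ν, one has W₁(μ,ν)² ≤ Σ_{m ∈ ℤ^d, m ≠ 0} |f_μ(m) − f_ν(m)|² / |m|². -/
open MeasureTheory Real ENNReal

noncomputable section

/-- Euclidean distance on `Fin d → ℝ`. -/
def euclidDist {d : ℕ} (x y : Fin d → ℝ) : ℝ := Real.sqrt (∑ i, (x i - y i) ^ 2)

/-- `γ` is a coupling of `μ` and `ν`. -/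
def IsCoupling {α : Type*} [MeasurableSpace α]
    (γ : Measure (α × α)) (μ ν : Measure α) : Prop :=
  γ.map Prod.fst = μ ∧ γ.map Prod.snd = ν

/-- Optimal transport cost for a cost function `c`. -/
def transportCost {α : Type*} [MeasurableSpace α] (c : α → α → ℝ)
    (μ ν : Measure α) : ℝ≥0∞ :=
  ⨅ (γ : Measure (α × α)) (_ : IsCoupling γ μ ν),
    ∫⁻ p, ENNReal.ofReal (c p.1 p.2) ∂γ

/-- Euclidean Kantorovich distance `W₁`. -/
def W1 {d : ℕ} (μ ν : Measure (Fin d → ℝ)) : ℝ≥0∞ := transportCost euclidDist μ ν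

/-- Fourier–Stieltjes transform `f_μ(m) = ∫ e^{i⟨m,x⟩} dμ(x)`, `m ∈ ℤ^d`. -/
def fourierStieltjes {d : ℕ} (μ : Measure (Fin d → ℝ)) (m : Fin d → ℤ) : ℂ :=
  ∫ x, Complex.exp (Complex.I * ∑ i, (m i : ℂ) * (x i : ℂ)) ∂μ


lemma inf_conv {X : Type*} [TopologicalSpace X] [CompactSpace X] [Nonempty X]
    (c : C(X × X, ℝ)) (hc0 : ∀ x, c (x, x) = 0)
    (hnn : ∀ x y, 0 ≤ c (x, y)) (htri : ∀ x y z, c (x, z) ≤ c (x, y) + c (y, z))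
    (hsymm : ∀ x y, c (x, y) = c (y, x)) (ψ : C(X, ℝ)) (t : ℝ) (ht : 0 ≤ t) :
    ∃ f : C(X, ℝ), (∀ x y, f x - f y ≤ t * c (x, y)) ∧ (∀ x, f x ≤ ψ x) ∧
      (∀ x r, (∀ y, r ≤ ψ y + t * c (x, y)) → r ≤ f x) := by
  let F : X → ℝ := fun x => ⨅ y, (ψ y + t * c (x, y))
  have hb : ∀ x, BddBelow (Set.range fun y => ψ y + t * c (x, y)) := by
    intro x
    refine ⟨-‖ψ‖, ?_⟩
    rintro _ ⟨y, rfl⟩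
    have h1 := ψ.norm_coe_le_norm y
    have h2 := neg_abs_le (ψ y)
    rw [Real.norm_eq_abs] at h1
    have := mul_nonneg ht (hnn x y)
    simp only; linarith
  have hlip : ∀ x y, F x - F y ≤ t * c (x, y) := by
    intro x y
    rw [sub_le_iff_le_add, ← sub_le_iff_le_add']
    refine le_ciInf fun z => ?_
    have h1 : F x ≤ ψ z + t * c (x, z) := ciInf_le (hb x) z
    have h2 := mul_le_mul_of_nonneg_left (htri x y z) ht
    linarith
  have hcont : Continuous F := by
    rw [continuous_iff_continuousAt]
    intro x0
    rw [ContinuousAt, tendsto_iff_dist_tendsto_zero]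
    refine squeeze_zero (g := fun x => t * c (x, x0)) (fun _ => dist_nonneg) (fun x => ?_) ?_
    · rw [Real.dist_eq, abs_le]
      have h1 := hlip x x0
      have h2 := hlip x0 x
      rw [hsymm x0 x] at h2
      constructor <;> linarith
    · have : Continuous fun x => t * c (x, x0) := by fun_prop
      have h := this.tendsto x0
      simpa [hc0] using h
  refine ⟨⟨F, hcont⟩, hlip, fun x => ?_, fun x r h => le_ciInf h⟩
  have := ciInf_le (hb x) x
  simpa [hc0] using this

lemma integrable_cont {X : Type*} [TopologicalSpace X] [CompactSpace X] [MeasurableSpace X]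
    [OpensMeasurableSpace X] (μ : Measure X) [IsFiniteMeasure μ]
    (f : C(X, ℝ)) : Integrable f μ :=
  f.continuous.integrable_of_hasCompactSupport (HasCompactSupport.of_compactSpace _)

theorem kantorovich {X : Type*} [MetricSpace X] [CompactSpace X] [Nonempty X]
    [MeasurableSpace X] [BorelSpace X] (μ ν : Measure X) [IsProbabilityMeasure μ]
    [IsProbabilityMeasure ν] (c : C(X × X, ℝ)) (hc0 : ∀ x, c (x, x) = 0)
    (hnn : ∀ x y, 0 ≤ c (x, y)) (htri : ∀ x y z, c (x, z) ≤ c (x, y) + c (y, z))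
    (hsymm : ∀ x y, c (x, y) = c (y, x)) (C : ℝ)
    (hC : ∀ f : C(X, ℝ), (∀ x y, f x - f y ≤ c (x, y)) → ∫ x, f x ∂μ - ∫ x, f x ∂ν ≤ C) :
    ∃ γ : Measure (X × X), γ.map Prod.fst = μ ∧ γ.map Prod.snd = ν ∧
      ∫⁻ p, ENNReal.ofReal (c p) ∂γ ≤ ENNReal.ofReal C := by
  have hC' : ∀ t : ℝ, 0 ≤ t → ∀ f : C(X, ℝ), (∀ x y, f x - f y ≤ t * c (x, y)) →
      ∫ x, f x ∂μ - ∫ x, f x ∂ν ≤ t * C := by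
    intro t ht f hf
    rcases ht.eq_or_lt with rfl | ht
    · obtain ⟨x0⟩ := ‹Nonempty X›
      have : ∀ x, f x = f x0 := fun x => le_antisymm (by linarith [hf x x0]) (by linarith [hf x0 x])
      simp [this]
    · have := hC (t⁻¹ • f) (fun x y => by
        have h := mul_le_mul_of_nonneg_left (hf x y) (inv_nonneg.2 ht.le)
        rw [inv_mul_cancel_left₀ ht.ne'] at h
        simp only [ContinuousMap.smul_apply, smul_eq_mul]
        linarith)
      simp only [ContinuousMap.smul_apply, smul_eq_mul, integral_const_mul] at this
      rw [← mul_sub] at this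
      rwa [inv_mul_le_iff₀ ht] at this
  let A : C(X × X, ℝ) → Set ℝ := fun h => {r | ∃ (φ ψ : C(X, ℝ)) (t : ℝ), 0 ≤ t ∧
    (∀ x y, h (x, y) ≤ φ x + ψ y + t * c (x, y)) ∧ r = ∫ x, φ x ∂μ + ∫ x, ψ x ∂ν + t * C}
  have hlow : ∀ h, ∀ r ∈ A h, -‖h‖ ≤ r := by
    rintro h _ ⟨φ, ψ, t, ht, hle, rfl⟩
    obtain ⟨f, hf1, hf2, hf3⟩ := inf_conv c hc0 hnn htri hsymm ψ t ht
    have h1 := hC' t ht f hf1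
    have h2 : ∫ x, f x ∂ν ≤ ∫ x, ψ x ∂ν :=
      integral_mono (integrable_cont _ _) (integrable_cont _ _) hf2
    have h3 : ∫ x, (-‖h‖ - φ x) ∂μ ≤ ∫ x, f x ∂μ := by
      refine integral_mono ((integrable_const _).sub (integrable_cont _ _)) (integrable_cont _ _) ?_
      intro x
      refine hf3 x _ fun y => ?_
      have e1 := hle x y
      have e2 := h.norm_coe_le_norm (x, y)
      have e3 := neg_abs_le (h (x, y))
      rw [Real.norm_eq_abs] at e2
      linarith
    rw [integral_sub (integrable_const _) (integrable_cont _ _)] at h3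
    simp at h3
    linarith
  have hbdd : ∀ h, BddBelow (A h) := fun h => ⟨_, hlow h⟩
  have hne : ∀ h, (A h).Nonempty := by
    intro h
    refine ⟨_, ContinuousMap.const _ ‖h‖, 0, 0, le_rfl, fun x y => ?_, rfl⟩
    have := (le_abs_self _).trans (h.norm_coe_le_norm (x, y))
    simpa using this
  let N : C(X × X, ℝ) → ℝ := fun h => sInf (A h)
  have hle_of : ∀ h r, r ∈ A h → N h ≤ r := fun h r hr => csInf_le (hbdd h) hr
  have hsc : ∀ a : ℝ, 0 < a → ∀ h, ∀ r ∈ A h, a * r ∈ A (a • h) := by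
    rintro a ha h _ ⟨φ, ψ, t, ht, hle, rfl⟩
    refine ⟨a • φ, a • ψ, a * t, by positivity, fun x y => ?_, ?_⟩
    · have := mul_le_mul_of_nonneg_left (hle x y) ha.le
      simp only [ContinuousMap.smul_apply, smul_eq_mul]
      linarith
    · simp only [ContinuousMap.smul_apply, smul_eq_mul, integral_const_mul]
      ring
  have N_le : ∀ a : ℝ, 0 < a → ∀ h, N (a • h) ≤ a * N h := by
    intro a ha h
    rw [← div_le_iff₀' ha]
    refine le_csInf (hne h) fun r hr => ?_
    rw [div_le_iff₀' ha]
    exact hle_of _ _ (hsc a ha h r hr)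
  have N_hom : ∀ a : ℝ, 0 < a → ∀ h, N (a • h) = a * N h := by
    intro a ha h
    refine le_antisymm (N_le a ha h) ?_
    have := N_le a⁻¹ (inv_pos.2 ha) (a • h)
    rw [inv_smul_smul₀ ha.ne', ← div_eq_inv_mul, le_div_iff₀' ha] at this
    exact this
  have N_add : ∀ h k, N (h + k) ≤ N h + N k := by
    intro h k
    rw [← sub_le_iff_le_add]
    refine le_csInf (hne h) fun r hr => ?_
    rw [sub_le_comm]
    refine le_csInf (hne k) fun s hs => ?_
    rw [sub_le_iff_le_add']
    apply hle_of
    obtain ⟨φ, ψ, t, ht, hle, rfl⟩ := hr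
    obtain ⟨φ', ψ', t', ht', hle', rfl⟩ := hs
    refine ⟨φ + φ', ψ + ψ', t + t', by positivity, fun x y => ?_, ?_⟩
    · have := hle x y
      have := hle' x y
      simp only [ContinuousMap.add_apply]
      linarith
    · simp only [ContinuousMap.add_apply]
      rw [integral_add (integrable_cont _ _) (integrable_cont _ _),
        integral_add (integrable_cont _ _) (integrable_cont _ _)]
      ring
  have N_zero : N 0 = 0 := by
    have := N_hom 2 (by norm_num) 0
    rw [smul_zero] at this
    linarith
  obtain ⟨Λ, -, hΛ⟩ := exists_extension_of_le_sublinear (⊥ : C(X × X, ℝ) →ₗ.[ℝ] ℝ) N N_hom N_add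
    (by
      rintro ⟨x, hx⟩
      have hx' : x = 0 := (Submodule.mem_bot ℝ).1 hx
      subst hx'
      have : (⟨0, hx⟩ : (⊥ : C(X × X, ℝ) →ₗ.[ℝ] ℝ).domain) = 0 := rfl
      rw [this, LinearPMap.map_zero]
      simp [N_zero])
  have hpos : ∀ h : C(X × X, ℝ), 0 ≤ h → 0 ≤ Λ h := by
    intro h hh
    have h1 : N (-h) ≤ 0 := hle_of _ _ ⟨0, 0, 0, le_rfl, fun x y => by simpa using hh (x, y), by simp⟩
    have h2 := hΛ (-h)
    rw [map_neg] at h2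
    linarith
  have hfst' : ∀ φ : C(X, ℝ), Λ (φ.comp ContinuousMap.fst) ≤ ∫ x, φ x ∂μ := fun φ =>
    (hΛ _).trans (hle_of _ _ ⟨φ, 0, 0, le_rfl, fun x y => by simp, by simp⟩)
  have hsnd' : ∀ φ : C(X, ℝ), Λ (φ.comp ContinuousMap.snd) ≤ ∫ x, φ x ∂ν := fun φ =>
    (hΛ _).trans (hle_of _ _ ⟨0, φ, 0, le_rfl, fun x y => by simp, by simp⟩)
  have hfst : ∀ φ : C(X, ℝ), Λ (φ.comp ContinuousMap.fst) = ∫ x, φ x ∂μ := by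
    intro φ
    refine le_antisymm (hfst' φ) ?_
    have h1 := hfst' (-φ)
    have h2 : (-φ).comp (ContinuousMap.fst : C(X × X, X)) = -(φ.comp ContinuousMap.fst) := rfl
    rw [h2, map_neg] at h1
    simp only [ContinuousMap.neg_apply, integral_neg] at h1
    linarith
  have hsnd : ∀ φ : C(X, ℝ), Λ (φ.comp ContinuousMap.snd) = ∫ x, φ x ∂ν := by
    intro φ
    refine le_antisymm (hsnd' φ) ?_
    have h1 := hsnd' (-φ)
    have h2 : (-φ).comp (ContinuousMap.snd : C(X × X, X)) = -(φ.comp ContinuousMap.snd) := rfl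
    rw [h2, map_neg] at h1
    simp only [ContinuousMap.neg_apply, integral_neg] at h1
    linarith
  have hcC : Λ c ≤ C :=
    (hΛ _).trans (hle_of _ _ ⟨0, 0, 1, zero_le_one, fun x y => by simp, by simp⟩)
  let L : CompactlySupportedContinuousMap (X × X) ℝ →ₚ[ℝ] ℝ := PositiveLinearMap.mk₀
    { toFun := fun g => Λ g.toContinuousMap
      map_add' := fun f g => Λ.map_add _ _
      map_smul' := fun a g => Λ.map_smul _ _ } (fun g hg => hpos _ hg)
  let γ := RealRMK.rieszMeasure L
  have hγ : ∀ h : C(X × X, ℝ), ∫ p, h p ∂γ = Λ h := by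
    intro h
    exact RealRMK.integral_rieszMeasure L ⟨h, HasCompactSupport.of_compactSpace _⟩
  have : IsFiniteMeasure γ := inferInstance
  refine ⟨γ, ?_, ?_, ?_⟩
  · refine ext_of_forall_integral_eq_of_IsFiniteMeasure fun f => ?_
    rw [integral_map (by fun_prop) (f.continuous.aestronglyMeasurable)]
    refine Eq.trans ?_ (hfst f.toContinuousMap)
    exact hγ (f.toContinuousMap.comp ContinuousMap.fst)
  · refine ext_of_forall_integral_eq_of_IsFiniteMeasure fun f => ?_
    rw [integral_map (by fun_prop) (f.continuous.aestronglyMeasurable)]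
    refine Eq.trans ?_ (hsnd f.toContinuousMap)
    exact hγ (f.toContinuousMap.comp ContinuousMap.snd)
  · rw [← ofReal_integral_eq_lintegral_ofReal (integrable_cont _ _) (ae_of_all _ fun p => hnn _ _),
      hγ]
    exact ENNReal.ofReal_le_ofReal hcC

section Torus
open UnitAddTorus

/-- Normalised measure on the circle. -/
local instance instMSCircle : MeasureSpace UnitAddCircle := ⟨AddCircle.haarAddCircle⟩
local instance instHaarCircle : Measure.IsAddHaarMeasure (volume : Measure UnitAddCircle) :=
  inferInstanceAs (Measure.IsAddHaarMeasure AddCircle.haarAddCircle)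
local instance instProbCircle : IsProbabilityMeasure (volume : Measure UnitAddCircle) :=
  inferInstanceAs (IsProbabilityMeasure AddCircle.haarAddCircle)

variable {d : ℕ}

lemma mFourier_apply_add (n : Fin d → ℤ) (x y : UnitAddTorus (Fin d)) :
    mFourier n (x + y) = mFourier n x * mFourier n y := by
  simp [mFourier, fourier_apply, smul_add, AddCircle.toCircle_add, Finset.prod_mul_distrib]

lemma mFourier_apply_norm (n : Fin d → ℤ) (x : UnitAddTorus (Fin d)) :
    ‖mFourier n x‖ = 1 := by
  simp only [mFourier, fourier_apply, ContinuousMap.coe_mk, norm_prod, Circle.norm_coe,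
    Finset.prod_const_one]

lemma mFourier_neg_mul (n : Fin d → ℤ) (x : UnitAddTorus (Fin d)) :
    mFourier n x * mFourier (-n) x = 1 := by
  rw [← mFourier_add]; simp [mFourier_zero]

lemma coeff_shift (U : UnitAddTorus (Fin d) → ℂ) (a : UnitAddTorus (Fin d)) (n : Fin d → ℤ) :
    mFourierCoeff (fun x => U (x + a)) n = mFourier n a * mFourierCoeff U n := by
  unfold mFourierCoeff
  rw [← integral_const_mul,
    ← integral_add_right_eq_self (μ := volume) (fun t => mFourier n a * (mFourier (-n) t • U t)) a]
  congr 1; ext t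
  rw [mFourier_apply_add]
  have := mFourier_neg_mul n a
  simp only [smul_eq_mul]
  linear_combination (-(mFourier (-n) t) * U (t + a)) * this

lemma parseval_cont (f : C(UnitAddTorus (Fin d), ℂ)) :
    HasSum (fun n => ‖mFourierCoeff f n‖ ^ 2) (∫ t, ‖f t‖ ^ 2) := by
  have h := hasSum_sq_mFourierCoeff (f.toLp 2 volume ℂ)
  simp only [mFourierCoeff_toLp] at h
  convert! h using 1
  refine integral_congr_ae ?_
  filter_upwards [ContinuousMap.coeFn_toLp (p := 2) (𝕜 := ℂ) volume f] with t ht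
  rw [ht]

lemma integrable_contC {X : Type*} [TopologicalSpace X] [CompactSpace X] [MeasurableSpace X]
    [OpensMeasurableSpace X] {E : Type*} [NormedAddCommGroup E] [SecondCountableTopology E] (μ : Measure X) [IsFiniteMeasure μ]
    (f : X → E) (hf : Continuous f) : Integrable f μ :=
  hf.integrable_of_hasCompactSupport (HasCompactSupport.of_compactSpace _)

/-- kernel -/
lemma exists_kernel (ε : ℝ) (hε : 0 < ε) : ∃ k : C(UnitAddTorus (Fin d), ℝ),
    (∀ t, 0 ≤ k t) ∧ (∫ t, k t = 1) ∧ ∀ t, k t ≠ 0 → ‖t‖ < ε := by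
  let g : C(UnitAddTorus (Fin d), ℝ) := ⟨fun t => max 0 (ε - ‖t‖), by fun_prop⟩
  have hZ : 0 < ∫ t, g t := by
    refine g.continuous.integral_pos_of_hasCompactSupport_nonneg_nonzero (x := 0)
      (HasCompactSupport.of_compactSpace _) (fun t => le_max_left _ _) ?_
    have : g 0 = max 0 ε := by simp [g]
    rw [this, max_eq_right hε.le]; exact hε.ne'
  refine ⟨(∫ t, g t)⁻¹ • g, fun t => ?_, ?_, fun t ht => ?_⟩
  · exact mul_nonneg (inv_nonneg.2 hZ.le) (le_max_left _ _)
  · simp only [ContinuousMap.smul_apply, smul_eq_mul, integral_const_mul]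
    exact inv_mul_cancel₀ hZ.ne'
  · by_contra hlt
    apply ht
    have : g t = 0 := max_eq_left (by linarith)
    simp [this]

lemma torus_main (U : C(UnitAddTorus (Fin d), ℂ)) (μ ν : Measure (UnitAddTorus (Fin d)))
    [IsProbabilityMeasure μ] [IsProbabilityMeasure ν] (B : ℝ)
    (hU : ∀ F : Finset (Fin d → ℤ), ∑ m ∈ F, (∑ i, (m i : ℝ) ^ 2) * ‖mFourierCoeff U m‖ ^ 2 ≤ 1)
    (hB : ∀ F : Finset (Fin d → ℤ),
      ∑ m ∈ F, ‖∫ x, mFourier m x ∂μ - ∫ x, mFourier m x ∂ν‖ ^ 2 / (∑ i, (m i : ℝ) ^ 2) ≤ B) :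
    ‖∫ x, U x ∂μ - ∫ x, U x ∂ν‖ ≤ √B := by
  refine le_of_forall_pos_le_add fun δ hδ => ?_
  have huc : UniformContinuous U := CompactSpace.uniformContinuous_of_continuous U.continuous
  obtain ⟨ε, hε, hUε⟩ := Metric.uniformContinuous_iff.1 huc (δ / 2) (by positivity)
  obtain ⟨k, hk0, hk1, hkε⟩ := exists_kernel (d := d) ε hε
  have hjc : Continuous fun p : UnitAddTorus (Fin d) × UnitAddTorus (Fin d) =>
      (k p.2 : ℂ) * U (p.1 + p.2) := by fun_prop
  let V : C(UnitAddTorus (Fin d), ℂ) := ⟨fun x => ∫ t, (k t : ℂ) * U (x + t), by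
    have := continuous_parametric_integral_of_continuous (μ := (volume : Measure (UnitAddTorus (Fin d))))
      (f := fun x t => (k t : ℂ) * U (x + t)) hjc (s := Set.univ) isCompact_univ
    simpa using this⟩
  let κ : (Fin d → ℤ) → ℂ := fun m => ∫ t, (k t : ℂ) * mFourier m t
  let a : (Fin d → ℤ) → ℂ := fun m => ∫ x, mFourier m x ∂μ - ∫ x, mFourier m x ∂ν
  have hVU : ∀ x, ‖V x - U x‖ ≤ δ / 2 := by
    intro x
    have h1 : U x = ∫ t, (k t : ℂ) * U x := by
      rw [integral_mul_const, integral_complex_ofReal, hk1]; simp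
    have h2 : V x - U x = ∫ t, (k t : ℂ) * (U (x + t) - U x) := by
      conv_lhs => rw [h1]
      change (∫ t, (k t : ℂ) * U (x + t)) - _ = _
      rw [← integral_sub (integrable_contC _ _ (by fun_prop)) (integrable_contC _ _ (by fun_prop))]
      simp only [mul_sub]
    rw [h2]
    calc _ ≤ ∫ t, k t * (δ / 2) := by
          refine norm_integral_le_of_norm_le (integrable_contC _ _ (by fun_prop)) (ae_of_all _ fun t => ?_)
          rw [norm_mul, Complex.norm_real, Real.norm_of_nonneg (hk0 t)]
          by_cases hkt : k t = 0
          · simp [hkt]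
          · refine mul_le_mul_of_nonneg_left ?_ (hk0 t)
            rw [← dist_eq_norm]
            exact (hUε (by simpa [dist_eq_norm] using hkε t hkt)).le
      _ = δ / 2 := by rw [integral_mul_const, hk1, one_mul]
  have hVc : ∀ m, mFourierCoeff V m = κ m * mFourierCoeff U m := by
    intro m
    calc mFourierCoeff V m = ∫ x, ∫ t, mFourier (-m) x * ((k t : ℂ) * U (x + t)) := by
          unfold mFourierCoeff
          simp only [integral_const_mul, smul_eq_mul]; rfl
      _ = ∫ t, ∫ x, mFourier (-m) x * ((k t : ℂ) * U (x + t)) := by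
          refine integral_integral_swap (integrable_contC _ _ ?_)
          simp only [Function.uncurry_def]; fun_prop
      _ = ∫ t, (k t : ℂ) * mFourier m t * mFourierCoeff U m := by
          congr 1; ext t
          rw [mul_assoc, ← coeff_shift]
          unfold mFourierCoeff
          rw [← integral_const_mul]
          congr 1; ext x; simp only [smul_eq_mul]; ring
      _ = _ := by rw [integral_mul_const]
  have hκ1 : ∀ m, ‖κ m‖ ≤ 1 := by
    intro m
    rw [← hk1]
    refine norm_integral_le_of_norm_le (integrable_contC _ _ k.continuous) (ae_of_all _ fun t => ?_)
    rw [norm_mul, mFourier_apply_norm, Complex.norm_real, Real.norm_of_nonneg (hk0 t), mul_one]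
  have hκs : Summable fun m => ‖κ m‖ ^ 2 := by
    have h := (parseval_cont (d := d) ⟨fun t => (k t : ℂ), by fun_prop⟩).summable
    have h2 := (Equiv.neg (Fin d → ℤ)).summable_iff.2 h
    refine h2.congr fun m => ?_
    simp only [Function.comp, Equiv.neg_apply, κ, mFourierCoeff, neg_neg, ContinuousMap.coe_mk, smul_eq_mul, mul_comm]
  have hVs : Summable (mFourierCoeff V) := by
    refine Summable.of_norm_bounded (g := fun m => ‖κ m‖ ^ 2 + ‖mFourierCoeff U m‖ ^ 2)
      (hκs.add (parseval_cont U).summable) fun m => ?_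
    rw [hVc, norm_mul]
    nlinarith [sq_nonneg (‖κ m‖ - ‖mFourierCoeff U m‖), sq_nonneg ‖κ m‖, sq_nonneg ‖mFourierCoeff U m‖]
  have hsum : ∀ (ρ : Measure (UnitAddTorus (Fin d))) [IsProbabilityMeasure ρ],
      HasSum (fun m => mFourierCoeff V m * ∫ x, mFourier m x ∂ρ) (∫ x, V x ∂ρ) := by
    intro ρ _
    have h := hasSum_integral_of_summable_integral_norm (μ := ρ)
      (F := fun m x => mFourierCoeff V m * mFourier m x)
      (fun m => integrable_contC _ _ (by fun_prop))
      (by simpa [mFourier_apply_norm] using hVs.norm)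
    simp only [integral_const_mul] at h
    convert! h using 1
    congr 1; ext x
    exact (hasSum_mFourier_series_apply_of_summable hVs x).tsum_eq.symm
  have hVab : HasSum (fun m => mFourierCoeff V m * a m) (∫ x, V x ∂μ - ∫ x, V x ∂ν) := by
    convert! (hsum μ).sub (hsum ν) using 1
    ext m; simp only [a, mul_sub]
  have hVB : ‖∫ x, V x ∂μ - ∫ x, V x ∂ν‖ ≤ √B := by
    refine le_of_tendsto hVab.norm (Filter.Eventually.of_forall fun F => ?_)
    calc ‖∑ m ∈ F, mFourierCoeff V m * a m‖
        ≤ ∑ m ∈ F, (√(∑ i, (m i : ℝ) ^ 2) * ‖mFourierCoeff U m‖) * (‖a m‖ / √(∑ i, (m i : ℝ) ^ 2)) := by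
          refine norm_sum_le_of_le _ fun m _ => ?_
          by_cases hm : m = 0
          · subst hm
            have : a 0 = 0 := by simp [a, mFourier_zero]
            simp [this]
          · have hpos : 0 < ∑ i, (m i : ℝ) ^ 2 := by
              obtain ⟨i, hi⟩ := Function.ne_iff.1 hm
              refine Finset.sum_pos' (fun _ _ => sq_nonneg _) ⟨i, Finset.mem_univ _, ?_⟩
              have : (m i : ℝ) ≠ 0 := by exact_mod_cast hi
              positivity
            have hs := Real.sqrt_pos.2 hpos
            rw [norm_mul, hVc, norm_mul]
            have : √(∑ i, (m i : ℝ) ^ 2) * ‖mFourierCoeff U m‖ * (‖a m‖ / √(∑ i, (m i : ℝ) ^ 2)) =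
              1 * ‖mFourierCoeff U m‖ * ‖a m‖ := by field_simp
            rw [this]
            gcongr
            exact hκ1 m
      _ ≤ √(∑ m ∈ F, (√(∑ i, (m i : ℝ) ^ 2) * ‖mFourierCoeff U m‖) ^ 2) *
          √(∑ m ∈ F, (‖a m‖ / √(∑ i, (m i : ℝ) ^ 2)) ^ 2) := Real.sum_mul_le_sqrt_mul_sqrt _ _ _
      _ ≤ 1 * √B := by
          gcongr
          · rw [Real.sqrt_le_one]
            refine le_trans (le_of_eq ?_) (hU F)
            refine Finset.sum_congr rfl fun m _ => ?_
            rw [mul_pow, Real.sq_sqrt (Finset.sum_nonneg fun _ _ => sq_nonneg _)]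
          · refine le_trans (le_of_eq ?_) (hB F)
            refine Finset.sum_congr rfl fun m _ => ?_
            rw [div_pow, Real.sq_sqrt (Finset.sum_nonneg fun _ _ => sq_nonneg _)]
      _ = √B := one_mul _
  have hd : ∀ (ρ : Measure (UnitAddTorus (Fin d))) [IsProbabilityMeasure ρ],
      ‖∫ x, U x ∂ρ - ∫ x, V x ∂ρ‖ ≤ δ / 2 := by
    intro ρ _
    rw [← integral_sub (integrable_contC _ _ U.continuous) (integrable_contC _ _ V.continuous)]
    refine (norm_integral_le_of_norm_le_const (C := δ / 2) (ae_of_all _ fun x => ?_)).trans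
      (le_of_eq ?_)
    · rw [norm_sub_rev]; exact hVU x
    · simp
  have e : ∫ x, U x ∂μ - ∫ x, U x ∂ν = (∫ x, V x ∂μ - ∫ x, V x ∂ν) +
    ((∫ x, U x ∂μ - ∫ x, V x ∂μ) - (∫ x, U x ∂ν - ∫ x, V x ∂ν)) := by ring
  rw [e]
  refine (norm_add_le _ _).trans ?_
  have := norm_sub_le (∫ x, U x ∂μ - ∫ x, V x ∂μ) (∫ x, U x ∂ν - ∫ x, V x ∂ν)
  have := hd μ
  have := hd ν
  linarith

lemma coeff_sub (f g : C(UnitAddTorus (Fin d), ℂ)) (n : Fin d → ℤ) :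
    mFourierCoeff (fun x => f x - g x) n = mFourierCoeff f n - mFourierCoeff g n := by
  unfold mFourierCoeff
  rw [← integral_sub (integrable_contC _ _ (by fun_prop)) (integrable_contC _ _ (by fun_prop))]
  simp only [smul_sub]

lemma mFourier_single_apply (m : Fin d → ℤ) (j : Fin d) (h : ℝ) :
    mFourier m (fun i => (((h • (Pi.single j (1 : ℝ) : Fin d → ℝ)) i : ℝ) : UnitAddCircle)) =
      Complex.exp (2 * π * Complex.I * m j * h) := by
  simp only [mFourier, ContinuousMap.coe_mk]
  rw [Finset.prod_eq_single j]
  · rw [fourier_coe_apply]; simp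
  · intro i _ hi
    simp [hi]
  · simp

lemma cube_bound (u : C(UnitAddTorus (Fin d), ℝ)) (h : ℝ) (F : Finset (Fin d → ℤ)) :
    ∑ m ∈ F, (∑ j, ‖h⁻¹ • (Complex.exp (2 * π * Complex.I * m j * h) - 1)‖ ^ 2) *
        ‖mFourierCoeff (fun x => (u x : ℂ)) m‖ ^ 2 ≤
      ∫ x : Fin d → ℝ in {x : Fin d → ℝ | ∀ i, x i ∈ Set.Ioc (0 : ℝ) (0 + 1)},
        ∑ j, (h⁻¹ • (u (fun i => ((x + h • (Pi.single j (1 : ℝ) : Fin d → ℝ)) i : ℝ)) -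
          u (fun i => (x i : ℝ)))) ^ 2 := by
  let e : Fin d → UnitAddTorus (Fin d) := fun j =>
    fun i => (((h • (Pi.single j (1 : ℝ) : Fin d → ℝ)) i : ℝ) : UnitAddCircle)
  have key : ∀ j, ∑ m ∈ F, ‖h⁻¹ • (Complex.exp (2 * π * Complex.I * m j * h) - 1)‖ ^ 2 *
        ‖mFourierCoeff (fun x => (u x : ℂ)) m‖ ^ 2 ≤ ∫ x, (h⁻¹ • (u (x + e j) - u x)) ^ 2 := by
    intro j
    let uc : C(UnitAddTorus (Fin d), ℂ) := ⟨fun x => (u x : ℂ), by fun_prop⟩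
    let us : C(UnitAddTorus (Fin d), ℂ) := ⟨fun x => (u (x + e j) : ℂ), by fun_prop⟩
    have hp := sum_le_hasSum F (fun _ _ => by positivity) (parseval_cont (us - uc))
    have hc : ∀ m, mFourierCoeff (us - uc) m =
        (Complex.exp (2 * π * Complex.I * m j * h) - 1) * mFourierCoeff (fun x => (u x : ℂ)) m := by
      intro m
      have h1 := coeff_sub us uc m
      have h2 := coeff_shift (fun x => (u x : ℂ)) (e j) m
      rw [mFourier_single_apply] at h2
      have h3 : mFourierCoeff (⇑(us - uc)) m = mFourierCoeff (fun x => us x - uc x) m := rfl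
      rw [h3, h1]
      change mFourierCoeff (fun x => (u (x + e j) : ℂ)) m - mFourierCoeff (fun x => (u x : ℂ)) m = _
      rw [h2]; ring
    have hI : ∫ x, (h⁻¹ • (u (x + e j) - u x)) ^ 2 = (h⁻¹) ^ 2 * ∫ t, ‖(us - uc) t‖ ^ 2 := by
      rw [← integral_const_mul]
      congr 1; ext x
      have : (us - uc) x = ((u (x + e j) - u x : ℝ) : ℂ) := by simp [us, uc]
      rw [this, Complex.norm_real, Real.norm_eq_abs, sq_abs, smul_eq_mul, mul_pow]
    rw [hI]
    refine le_trans (le_of_eq ?_) (mul_le_mul_of_nonneg_left hp (sq_nonneg h⁻¹))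
    rw [Finset.mul_sum]
    refine Finset.sum_congr rfl fun m _ => ?_
    rw [hc, norm_smul, norm_mul, mul_pow, mul_pow, Real.norm_eq_abs, sq_abs]; ring
  have hpre := integral_preimage (fun x : UnitAddTorus (Fin d) => ∑ j, (h⁻¹ • (u (x + e j) - u x)) ^ 2)
    (fun _ => (0 : ℝ))
  have e2 : ∀ (x : Fin d → ℝ) j, (fun i => ((x + h • (Pi.single j (1 : ℝ) : Fin d → ℝ)) i : ℝ) : UnitAddTorus (Fin d)) =
      (fun i => (x i : UnitAddCircle)) + e j := by
    intro x j; ext i; simp [e]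
  simp only [e2]
  rw [← hpre, integral_finsetSum _ (fun j _ => integrable_contC _ _ (by fun_prop))]
  simp only [Finset.sum_mul]
  rw [Finset.sum_comm]
  exact Finset.sum_le_sum fun j _ => key j

lemma grad_bound (u : C(UnitAddTorus (Fin d), ℝ))
    (hLip : ∀ x y : Fin d → ℝ, |u (fun i => (x i : ℝ)) - u (fun i => (y i : ℝ))| ≤
      2 * π * √(∑ i, (x i - y i) ^ 2)) (F : Finset (Fin d → ℤ)) :
    ∑ m ∈ F, (∑ i, (m i : ℝ) ^ 2) * ‖mFourierCoeff (fun x => (u x : ℂ)) m‖ ^ 2 ≤ 1 := by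
  let ut : (Fin d → ℝ) → ℝ := fun x => u (fun i => (x i : ℝ))
  let Q : Set (Fin d → ℝ) := {x : Fin d → ℝ | ∀ i, x i ∈ Set.Ioc (0 : ℝ) (0 + 1)}
  have hQ : volume.real Q = 1 := by
    have : Q = Set.pi Set.univ fun _ => Set.Ioc (0 : ℝ) 1 := by ext; simp [Q]
    rw [this, Measure.real, Real.volume_pi_Ioc]; simp
  have : IsFiniteMeasure (volume.restrict Q) := by
    refine ⟨?_⟩
    rw [Measure.restrict_apply_univ]
    by_contra hcon
    simp only [not_lt, top_le_iff] at hcon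
    simp [Measure.real, hcon] at hQ
  have hut : Continuous ut := by
    refine u.continuous.comp (continuous_pi fun i => ?_)
    exact (AddCircle.continuous_mk' 1).comp (continuous_apply i)
  have hlw : ∃ C, LipschitzWith C ut := by
    refine ⟨Real.toNNReal (2 * π * √d), LipschitzWith.of_dist_le_mul fun x y => ?_⟩
    rw [Real.dist_eq, Real.coe_toNNReal _ (by positivity)]
    refine (hLip x y).trans ?_
    rw [mul_assoc (2 * π)]
    refine mul_le_mul_of_nonneg_left ?_ (by positivity : (0:ℝ) ≤ 2 * π)
    rw [← Real.sqrt_sq (dist_nonneg : 0 ≤ dist x y), ← Real.sqrt_mul (Nat.cast_nonneg d)]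
    refine Real.sqrt_le_sqrt ?_
    calc ∑ i, (x i - y i) ^ 2 ≤ ∑ i : Fin d, dist x y ^ 2 := by
          refine Finset.sum_le_sum fun i _ => ?_
          rw [← sq_abs, ← Real.dist_eq]
          have := dist_le_pi_dist x y i
          gcongr
      _ = d * dist x y ^ 2 := by simp
  obtain ⟨C, hC⟩ := hlw
  let G : (Fin d → ℝ) → ℝ := fun x => ∑ j, (fderiv ℝ ut x (Pi.single j (1 : ℝ))) ^ 2
  have hdiff : ∀ᵐ x ∂(volume.restrict Q), DifferentiableAt ℝ ut x :=
    ae_restrict_of_ae hC.ae_differentiableAt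
  have hG : ∀ᵐ x ∂(volume.restrict Q), ‖G x‖ ≤ (2 * π) ^ 2 := by
    filter_upwards [hdiff] with x hx
    have hG0 : 0 ≤ G x := Finset.sum_nonneg fun _ _ => sq_nonneg _
    rw [Real.norm_of_nonneg hG0]
    let v : Fin d → ℝ := fun j => fderiv ℝ ut x (Pi.single j (1 : ℝ))
    have h1 : fderiv ℝ ut x v = G x := by
      have : v = ∑ j, v j • (Pi.single j (1 : ℝ) : Fin d → ℝ) := by
        ext i
        simp [Finset.sum_apply, Pi.single_apply]
      rw [this, map_sum]
      simp only [map_smul, smul_eq_mul, G, sq, v]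
    have h2 : |fderiv ℝ ut x v| ≤ 2 * π * √(∑ i, (v i) ^ 2) := by
      have ht := ((hx.hasFDerivAt.hasLineDerivAt v).tendsto_slope_zero).norm
      refine le_of_tendsto ht (eventually_mem_nhdsWithin.mono fun t ht0 => ?_)
      have ht0' : t ≠ 0 := ht0
      rw [norm_smul, norm_inv, inv_mul_le_iff₀ (norm_pos_iff.2 ht0'), Real.norm_eq_abs, Real.norm_eq_abs]
      refine (hLip _ _).trans (le_of_eq ?_)
      have : ∑ i, ((x + t • v) i - x i) ^ 2 = t ^ 2 * ∑ i, (v i) ^ 2 := by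
        rw [Finset.mul_sum]; refine Finset.sum_congr rfl fun i _ => ?_
        simp; ring
      rw [this, Real.sqrt_mul (sq_nonneg t), Real.sqrt_sq_eq_abs]; ring
    rw [h1, abs_of_nonneg hG0] at h2
    change G x ≤ 2 * π * √(G x) at h2
    have h3 := Real.sq_sqrt hG0
    have h4 := Real.sqrt_nonneg (G x)
    have h5 : √(G x) ≤ 2 * π := by
      by_contra hcon
      push Not at hcon
      nlinarith [Real.pi_pos]
    calc G x = √(G x) ^ 2 := h3.symm
      _ ≤ _ := by gcongr
  have hlimR : Filter.Tendsto (fun h : ℝ => ∫ x in Q,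
        ∑ j, (h⁻¹ • (u (fun i => ((x + h • (Pi.single j (1 : ℝ) : Fin d → ℝ)) i : ℝ)) -
          u (fun i => (x i : ℝ)))) ^ 2) (nhdsWithin 0 {0}ᶜ) (nhds (∫ x in Q, G x)) := by
    refine tendsto_integral_filter_of_dominated_convergence (fun _ => ∑ j : Fin d, (2 * π) ^ 2) ?_ ?_
      (integrable_const _) ?_
    · refine Filter.Eventually.of_forall fun h => Continuous.aestronglyMeasurable ?_
      refine continuous_finsetSum _ fun j _ => ?_
      refine Continuous.pow ?_ 2
      have hs := hut.comp
        (by fun_prop : Continuous fun x : Fin d → ℝ => x + h • (Pi.single j (1 : ℝ) : Fin d → ℝ))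
      exact (hs.sub hut).const_smul h⁻¹
    · refine eventually_mem_nhdsWithin.mono fun t ht0 => ae_of_all _ fun x => ?_
      have ht0' : t ≠ 0 := ht0
      rw [Real.norm_of_nonneg (Finset.sum_nonneg fun _ _ => sq_nonneg _)]
      refine Finset.sum_le_sum fun j _ => ?_
      rw [← sq_abs]
      refine pow_le_pow_left₀ (abs_nonneg _) ?_ 2
      rw [smul_eq_mul, abs_mul, abs_inv, inv_mul_le_iff₀ (abs_pos.2 ht0')]
      refine (hLip _ _).trans (le_of_eq ?_)
      have : ∑ i, ((x + t • (Pi.single j (1 : ℝ) : Fin d → ℝ)) i - x i) ^ 2 = t ^ 2 := by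
        rw [Finset.sum_eq_single j]
        · simp
        · intro i _ hi; simp [hi]
        · simp
      rw [this, Real.sqrt_sq_eq_abs]; ring
    · filter_upwards [hdiff] with x hx
      refine tendsto_finsetSum _ fun j _ => ?_
      exact ((hx.hasFDerivAt.hasLineDerivAt (Pi.single j 1)).tendsto_slope_zero).pow 2
  have hlimL : Filter.Tendsto (fun h : ℝ => ∑ m ∈ F,
      (∑ j, ‖h⁻¹ • (Complex.exp (2 * π * Complex.I * m j * h) - 1)‖ ^ 2) *
        ‖mFourierCoeff (fun x => (u x : ℂ)) m‖ ^ 2) (nhdsWithin 0 {0}ᶜ)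
      (nhds (∑ m ∈ F, (∑ j, ‖2 * π * Complex.I * m j‖ ^ 2) *
        ‖mFourierCoeff (fun x => (u x : ℂ)) m‖ ^ 2)) := by
    refine tendsto_finsetSum _ fun m _ => Filter.Tendsto.mul_const _ ?_
    refine tendsto_finsetSum _ fun j _ => ?_
    refine (Filter.Tendsto.norm ?_).pow 2
    have hd : HasDerivAt (fun h : ℝ => Complex.exp (2 * π * Complex.I * m j * h))
        (2 * π * Complex.I * m j) 0 := by
      have h1 : HasDerivAt (fun h : ℝ => (2 * π * Complex.I * m j * h : ℂ))
          (2 * π * Complex.I * m j * 1) 0 := (Complex.ofRealCLM.hasDerivAt (x := (0 : ℝ))).const_mul _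
      simpa using h1.cexp
    simpa using hd.tendsto_slope_zero
  have hle := le_of_tendsto_of_tendsto' hlimL hlimR fun h => cube_bound u h F
  have hGle : ∫ x in Q, G x ≤ (2 * π) ^ 2 := by
    have h1 := norm_integral_le_of_norm_le_const (μ := volume.restrict Q) hG
    rw [measureReal_restrict_apply_univ, hQ, mul_one] at h1
    exact (le_abs_self _).trans h1
  have hfin : (2 * π) ^ 2 * ∑ m ∈ F, (∑ i, (m i : ℝ) ^ 2) *
      ‖mFourierCoeff (fun x => (u x : ℂ)) m‖ ^ 2 ≤ (2 * π) ^ 2 * 1 := by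
    rw [mul_one]
    refine le_trans (le_of_eq ?_) (hle.trans hGle)
    rw [Finset.mul_sum]
    refine Finset.sum_congr rfl fun m _ => ?_
    rw [← mul_assoc, Finset.mul_sum]
    congr 1
    refine Finset.sum_congr rfl fun j _ => ?_
    simp [mul_pow]
  exact le_of_mul_le_mul_left hfin (by positivity)

lemma lip_bound {μ ν : Measure (Set.Icc (0 : Fin d → ℝ) (fun _ => π))}
    [IsProbabilityMeasure μ] [IsProbabilityMeasure ν] (B : ℝ)
    (hB : ∀ F : Finset (Fin d → ℤ), ∑ m ∈ F,
      ‖∫ x, Complex.exp (Complex.I * ∑ i, (m i : ℂ) * (x.1 i : ℂ)) ∂μ -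
        ∫ x, Complex.exp (Complex.I * ∑ i, (m i : ℂ) * (x.1 i : ℂ)) ∂ν‖ ^ 2 /
          (∑ i, (m i : ℝ) ^ 2) ≤ B)
    (f : C(Set.Icc (0 : Fin d → ℝ) (fun _ => π), ℝ))
    (hf : ∀ x y, f x - f y ≤ √(∑ i, (x.1 i - y.1 i) ^ 2)) :
    ∫ x, f x ∂μ - ∫ x, f x ∂ν ≤ √B := by
  have hpi := Real.pi_pos
  let fold : UnitAddTorus (Fin d) → Set.Icc (0 : Fin d → ℝ) (fun _ => π) := fun y =>
    ⟨fun i => 2 * π * ‖y i‖, fun i => by simp only [Pi.zero_apply]; positivity, fun i => by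
      have := AddCircle.norm_le_half_period (1 : ℝ) (x := y i) one_ne_zero
      simp only [abs_one] at this
      change 2 * π * ‖y i‖ ≤ π
      nlinarith⟩
  have hfold : Continuous fold := by
    refine Continuous.subtype_mk (continuous_pi fun i => ?_) _
    exact continuous_const.mul (continuous_norm.comp (continuous_apply i))
  let u : C(UnitAddTorus (Fin d), ℝ) := ⟨fun y => f (fold y), f.continuous.comp hfold⟩
  let Θ : Set.Icc (0 : Fin d → ℝ) (fun _ => π) → UnitAddTorus (Fin d) := fun x i =>
    ((x.1 i / (2 * π) : ℝ) : UnitAddCircle)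
  have hΘ : Continuous Θ := by
    refine continuous_pi fun i => ?_
    exact (AddCircle.continuous_mk' 1).comp
      (((continuous_apply i).comp continuous_subtype_val).div_const _)
  have hfΘ : ∀ x, fold (Θ x) = x := by
    intro x
    refine Subtype.ext (funext fun i => ?_)
    have h0 : 0 ≤ x.1 i := x.2.1 i
    have h1 : x.1 i ≤ π := x.2.2 i
    change 2 * π * ‖((x.1 i / (2 * π) : ℝ) : UnitAddCircle)‖ = x.1 i
    have h2 : ‖((x.1 i / (2 * π) : ℝ) : UnitAddCircle)‖ = |x.1 i / (2 * π)| := by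
      rw [AddCircle.norm_coe_eq_abs_iff _ one_ne_zero, abs_of_nonneg (by positivity), abs_one,
        div_le_div_iff₀ (by positivity) (by norm_num)]
      linarith
    rw [h2, abs_of_nonneg (by positivity)]
    field_simp
  have hnormle : ∀ r : ℝ, ‖(r : UnitAddCircle)‖ ≤ |r| := by
    intro r
    exact QuotientAddGroup.norm_mk_le_norm
  have hLip : ∀ x y : Fin d → ℝ, u (fun i => (x i : ℝ)) - u (fun i => (y i : ℝ)) ≤
      2 * π * √(∑ i, (x i - y i) ^ 2) := by
    intro x y
    refine (hf _ _).trans ?_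
    have e : 2 * π * √(∑ i, (x i - y i) ^ 2) = √(∑ i, (2 * π * (x i - y i)) ^ 2) := by
      simp only [mul_pow _ (_ - _)]
      rw [← Finset.mul_sum, Real.sqrt_mul (by positivity), Real.sqrt_sq (by positivity)]
    rw [e]
    refine Real.sqrt_le_sqrt (Finset.sum_le_sum fun i _ => ?_)
    change (2 * π * ‖(x i : UnitAddCircle)‖ - 2 * π * ‖(y i : UnitAddCircle)‖) ^ 2 ≤ _
    rw [← mul_sub, sq_le_sq, abs_mul (2 * π), abs_mul (2 * π)]
    refine mul_le_mul_of_nonneg_left ?_ (abs_nonneg _)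
    refine (abs_norm_sub_norm_le _ _).trans ?_
    rw [← AddCircle.coe_sub]
    exact hnormle _
  have hLip' : ∀ x y : Fin d → ℝ, |u (fun i => (x i : ℝ)) - u (fun i => (y i : ℝ))| ≤
      2 * π * √(∑ i, (x i - y i) ^ 2) := by
    intro x y
    rw [abs_sub_le_iff]
    refine ⟨hLip x y, (hLip y x).trans (le_of_eq ?_)⟩
    congr 3; ext i; ring
  have hexp : ∀ m x, mFourier m (Θ x) = Complex.exp (Complex.I * ∑ i, (m i : ℂ) * (x.1 i : ℂ)) := by
    intro m x
    simp only [mFourier, ContinuousMap.coe_mk, Θ, fourier_coe_apply]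
    rw [← Complex.exp_sum, Finset.mul_sum]
    congr 1
    refine Finset.sum_congr rfl fun i _ => ?_
    have : (π : ℂ) ≠ 0 := by exact_mod_cast hpi.ne'
    push_cast
    field_simp
  have hmap : ∀ (ρ : Measure (Set.Icc (0 : Fin d → ℝ) (fun _ => π)))
      (g : C(UnitAddTorus (Fin d), ℂ)), ∫ y, g y ∂(ρ.map Θ) = ∫ x, g (Θ x) ∂ρ := by
    intro ρ g
    exact integral_map hΘ.measurable.aemeasurable g.continuous.aestronglyMeasurable
  have := Measure.isProbabilityMeasure_map (μ := μ) hΘ.measurable.aemeasurable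
  have := Measure.isProbabilityMeasure_map (μ := ν) hΘ.measurable.aemeasurable
  have hmain := torus_main (d := d) ⟨fun x => (u x : ℂ), by fun_prop⟩ (μ.map Θ) (ν.map Θ) B
    (fun F => grad_bound u hLip' F) (fun F => by
      simp only [hmap, hexp]
      exact hB F)
  rw [hmap, hmap] at hmain
  simp only [ContinuousMap.coe_mk, u, hfΘ, integral_complex_ofReal] at hmain
  rw [← Complex.ofReal_sub, Complex.norm_real] at hmain
  exact (le_abs_self _).trans hmain

end Torus

lemma euclidDist_eq {d : ℕ} (x y : Fin d → ℝ) :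
    euclidDist x y = dist (WithLp.toLp 2 x) (WithLp.toLp 2 y) := by
  rw [EuclideanSpace.dist_eq]
  simp [euclidDist, Real.dist_eq, sq_abs]

theorem W1_sq_le_fourier_sum {d : ℕ}
    (μ ν : Measure (Fin d → ℝ)) [IsProbabilityMeasure μ] [IsProbabilityMeasure ν]
    (hμ : μ {x | ¬ ∀ i, x i ∈ Set.Icc (0 : ℝ) π} = 0)
    (hν : ν {x | ¬ ∀ i, x i ∈ Set.Icc (0 : ℝ) π} = 0) :
    W1 μ ν ^ 2 ≤
      ∑' m : {m : Fin d → ℤ // m ≠ 0},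
        ENNReal.ofReal
          (‖fourierStieltjes μ m - fourierStieltjes ν m‖ ^ 2 / ∑ i, ((m.1 i : ℝ)) ^ 2) := by
  let K : Set (Fin d → ℝ) := Set.Icc (0 : Fin d → ℝ) (fun _ => π)
  have hKm : MeasurableSet K := measurableSet_Icc
  have hemb : MeasurableEmbedding (Subtype.val : K → (Fin d → ℝ)) := MeasurableEmbedding.subtype_coe hKm
  have hpi := Real.pi_pos
  have hmap : ∀ ρ : Measure (Fin d → ℝ), ρ {x | ¬ ∀ i, x i ∈ Set.Icc (0 : ℝ) π} = 0 →
      (ρ.comap (Subtype.val : K → (Fin d → ℝ))).map Subtype.val = ρ := by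
    intro ρ hρ
    rw [map_comap_subtype_coe hKm]
    refine Measure.restrict_eq_self_of_ae_mem ?_
    rw [ae_iff]
    convert! hρ using 3
    ext x
    simp [K, Pi.le_def, forall_and]
  have hprob : ∀ ρ : Measure (Fin d → ℝ), IsProbabilityMeasure ρ →
      ρ {x | ¬ ∀ i, x i ∈ Set.Icc (0 : ℝ) π} = 0 →
      IsProbabilityMeasure (ρ.comap (Subtype.val : K → (Fin d → ℝ))) := by
    intro ρ h1 hρ
    refine ⟨?_⟩
    have h2 : ρ Set.univ = 1 := measure_univ
    rw [← hmap ρ hρ, hemb.map_apply] at h2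
    simpa using h2
  let S : ℝ≥0∞ := ∑' m : {m : Fin d → ℤ // m ≠ 0}, ENNReal.ofReal
          (‖fourierStieltjes μ m - fourierStieltjes ν m‖ ^ 2 / ∑ i, ((m.1 i : ℝ)) ^ 2)
  change _ ≤ S
  by_cases hS : S = ⊤
  · rw [hS]; exact le_top
  have hfs : ∀ ρ : Measure (Fin d → ℝ), ρ {x | ¬ ∀ i, x i ∈ Set.Icc (0 : ℝ) π} = 0 → ∀ m,
      ∫ x : K, Complex.exp (Complex.I * ∑ i, (m i : ℂ) * (x.1 i : ℂ)) ∂(ρ.comap Subtype.val) =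
        fourierStieltjes ρ m := by
    intro ρ hρ m
    unfold fourierStieltjes
    conv_rhs => rw [← hmap ρ hρ]
    rw [hemb.integral_map]
  have hB : ∀ F : Finset (Fin d → ℤ), ∑ m ∈ F,
      ‖fourierStieltjes μ m - fourierStieltjes ν m‖ ^ 2 / (∑ i, (m i : ℝ) ^ 2) ≤ S.toReal := by
    intro F
    let g : (Fin d → ℤ) → ℝ≥0∞ := fun m => ENNReal.ofReal
      (‖fourierStieltjes μ m - fourierStieltjes ν m‖ ^ 2 / (∑ i, (m i : ℝ) ^ 2))
    have h1 : S = ∑' m, g m := by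
      refine tsum_subtype_eq_of_support_subset (f := g) (s := {m | m ≠ 0}) fun m hm => ?_
      rintro rfl
      apply hm
      simp [g]
    rw [← ENNReal.ofReal_le_iff_le_toReal hS,
      ENNReal.ofReal_sum_of_nonneg (fun m _ => by positivity), h1]
    exact ENNReal.sum_le_tsum F
  have := hprob μ inferInstance hμ
  have := hprob ν inferInstance hν
  have : Nonempty K := ⟨⟨0, le_rfl, fun _ => hpi.le⟩⟩
  have : CompactSpace K := isCompact_iff_compactSpace.1 isCompact_Icc
  let c : C(K × K, ℝ) := ⟨fun p => euclidDist p.1.1 p.2.1, by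
    unfold euclidDist
    refine Real.continuous_sqrt.comp (continuous_finsetSum _ fun i _ => Continuous.pow ?_ 2)
    exact ((continuous_apply i).comp (continuous_subtype_val.comp continuous_fst)).sub
      ((continuous_apply i).comp (continuous_subtype_val.comp continuous_snd))⟩
  have hcd : ∀ x y : K, c (x, y) = dist (WithLp.toLp 2 x.1) (WithLp.toLp 2 y.1) :=
    fun x y => euclidDist_eq _ _
  obtain ⟨γ, hγ1, hγ2, hγ3⟩ := kantorovich (μ.comap (Subtype.val : K → (Fin d → ℝ)))
    (ν.comap (Subtype.val : K → (Fin d → ℝ))) c (fun x => by simp [hcd])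
    (fun x y => by rw [hcd]; exact dist_nonneg)
    (fun x y z => by simp only [hcd]; exact dist_triangle _ _ _)
    (fun x y => by simp only [hcd]; exact dist_comm _ _) (√S.toReal)
    (fun f hf => lip_bound S.toReal (fun F => by
      have := hB F
      simp only [← hfs μ hμ, ← hfs ν hν] at this
      exact this) f hf)
  have hW : W1 μ ν ≤ ENNReal.ofReal (√S.toReal) := by
    have hpm : Measurable (Prod.map Subtype.val Subtype.val : K × K → (Fin d → ℝ) × (Fin d → ℝ)) := by
      fun_prop
    refine iInf₂_le_of_le (γ.map (Prod.map Subtype.val Subtype.val)) ⟨?_, ?_⟩ ?_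
    · rw [Measure.map_map measurable_fst hpm, ← hmap μ hμ, ← hγ1,
        Measure.map_map measurable_subtype_coe measurable_fst]
      rfl
    · rw [Measure.map_map measurable_snd hpm, ← hmap ν hν, ← hγ2,
        Measure.map_map measurable_subtype_coe measurable_snd]
      rfl
    · rw [lintegral_map (by unfold euclidDist; fun_prop) hpm]
      exact hγ3
  calc W1 μ ν ^ 2 ≤ ENNReal.ofReal (√S.toReal) ^ 2 := by gcongr
    _ = S := by
      rw [← ENNReal.ofReal_pow (Real.sqrt_nonneg _), Real.sq_sqrt ENNReal.toReal_nonneg,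
        ENNReal.ofReal_toReal hS]
end
end

section
/- For every t > 0, the heat kernel measure γ_t on Q^d satisfies ∫_{Q^d} |y|² p_t(y) dy ≤ 2dt, where |·| is the Euclidean norm on ℝ^d. -/
open MeasureTheory Real

noncomputable section

/-- The cube `Q^d = (−π, π]^d`. -/
def Qcube (d : ℕ) : Set (Fin d → ℝ) := {x | ∀ i, x i ∈ Set.Ioc (-π) π}

/-- the cosine series -/
def hkS (y : ℝ) : ℝ := ∑' n : ℕ, 1 / (n : ℝ) ^ 2 * ((-1) ^ n * Real.cos (n * y))

theorem hkS_eq {y : ℝ} (hy : y ∈ Set.Icc (-π) π) : hkS y = y ^ 2 / 4 - π ^ 2 / 12 := by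
  have hpi := Real.pi_pos
  have hx : (y + π) / (2 * π) ∈ Set.Icc (0 : ℝ) 1 := by
    constructor
    · apply div_nonneg <;> linarith [hy.1]
    · rw [div_le_one (by positivity)]; linarith [hy.2]
  have h := hasSum_one_div_nat_pow_mul_cos (k := 1) one_ne_zero hx
  have hB : (Polynomial.map (algebraMap ℚ ℝ) (Polynomial.bernoulli (2 * 1))).eval
      ((y + π) / (2 * π)) = ((y + π) / (2 * π)) ^ 2 - (y + π) / (2 * π) + 1 / 6 := by
    rw [Polynomial.bernoulli_def]
    simp [Finset.sum_range_succ, _root_.bernoulli_one, _root_.bernoulli_two,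
      -Polynomial.map_monomial, Polynomial.eval_map, Polynomial.eval₂_add]
    ring
  rw [hB] at h
  unfold hkS
  have e : ∀ n : ℕ, 1 / (n : ℝ) ^ 2 * ((-1) ^ n * Real.cos (n * y)) =
      1 / (n : ℝ) ^ (2 * 1) * Real.cos (2 * π * n * ((y + π) / (2 * π))) := by
    intro n
    rw [← Real.cos_add_nat_mul_pi]
    congr 2
    field_simp
  simp_rw [e]
  rw [h.tsum_eq]
  simp [Nat.factorial]
  field_simp
  ring

theorem hkS_le (y : ℝ) : hkS y ≤ y ^ 2 / 4 - π ^ 2 / 12 := by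
  have hpi := Real.pi_pos
  by_cases hy : y ∈ Set.Icc (-π) π
  · exact (hkS_eq hy).le
  obtain ⟨N, hN, -⟩ := existsUnique_add_zsmul_mem_Ioc Real.two_pi_pos y (-π)
  rw [two_mul, neg_add_cancel_left, ← two_mul, zsmul_eq_mul] at hN
  have e : hkS y = hkS (y + N * (2 * π)) := by
    unfold hkS
    congr 1; ext n
    have : (n : ℝ) * (y + N * (2 * π)) = n * y + ((n * N : ℤ) : ℝ) * (2 * π) := by
      push_cast; ring
    rw [this, Real.cos_add_int_mul_two_pi]
  rw [e, hkS_eq ⟨hN.1.le, hN.2⟩]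
  have h1 : (y + N * (2 * π)) ^ 2 ≤ π ^ 2 := by
    apply sq_le_sq'
    · exact hN.1.le
    · exact hN.2
  have h2 : π ^ 2 ≤ y ^ 2 := by
    by_contra hc
    push Not at hc
    exact hy (Set.mem_Icc.2 (abs_le.1 (by
      have := abs_lt_of_sq_lt_sq hc hpi.le
      exact this.le)))
  linarith

theorem hk_summable : Summable (fun n : ℕ => 1 / (n : ℝ) ^ 2) := hasSum_zeta_two.summable

theorem hk_bound (n : ℕ) (y : ℝ) :
    ‖1 / (n : ℝ) ^ 2 * ((-1) ^ n * Real.cos (n * y))‖ ≤ 1 / (n : ℝ) ^ 2 := by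
  rw [norm_mul, norm_mul]
  simp only [norm_pow, norm_neg, norm_one, one_pow, one_mul, Real.norm_eq_abs]
  rw [abs_of_nonneg (by positivity)]
  exact mul_le_of_le_one_right (by positivity) (Real.abs_cos_le_one _)

theorem hkS_cont : Continuous hkS :=
  continuous_tsum (fun n => by fun_prop) hk_summable hk_bound

theorem hkS_bdd (y : ℝ) : ‖hkS y‖ ≤ ∑' n : ℕ, 1 / (n : ℝ) ^ 2 :=
  tsum_of_norm_bounded hk_summable.hasSum (fun n => hk_bound n y)

theorem hkS_integral {Ω : Type*} [MeasurableSpace Ω] (μ : Measure Ω) [IsProbabilityMeasure μ]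
    (X : Ω → ℝ) (hX : Measurable X) :
    ∫ w, hkS (X w) ∂μ = ∑' n : ℕ, 1 / (n : ℝ) ^ 2 * ((-1) ^ n * ∫ w, Real.cos (n * X w) ∂μ) := by
  have hI : ∀ n : ℕ, Integrable
      (fun w => 1 / (n : ℝ) ^ 2 * ((-1) ^ n * Real.cos (n * X w))) μ := fun n =>
    Integrable.of_bound (by fun_prop) _ (Filter.Eventually.of_forall fun w => hk_bound n (X w))
  unfold hkS
  rw [← integral_tsum_of_summable_integral_norm hI]
  · simp_rw [integral_const_mul]
  · refine Summable.of_nonneg_of_le (fun n => integral_nonneg fun w => norm_nonneg _) (fun n => ?_)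
      hk_summable
    calc _ ≤ ∫ w, 1 / (n : ℝ) ^ 2 ∂μ :=
          integral_mono (hI n).norm (integrable_const _) (fun w => hk_bound n (X w))
      _ = _ := by simp

theorem hk_gauss_cos (v : NNReal) (n : ℕ) :
    ∫ x, Real.cos (n * x) ∂(ProbabilityTheory.gaussianReal 0 v) = Real.exp (-(v * n ^ 2 / 2)) := by
  have h := ProbabilityTheory.charFun_gaussianReal (μ := 0) (v := v) (n : ℝ)
  rw [charFun_apply_real] at h
  have h2 := congrArg Complex.re h
  rw [← RCLike.re_eq_complex_re, ← integral_re] at h2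
  · have e : ∀ x : ℝ, RCLike.re (Complex.exp (((n : ℝ) : ℂ) * x * Complex.I)) =
        Real.cos (n * x) := by
      intro x
      rw [← Complex.ofReal_mul, RCLike.re_eq_complex_re, Complex.exp_ofReal_mul_I_re]
    simp_rw [e] at h2
    rw [h2, ← Complex.exp_ofReal_re]
    simp [RCLike.re_eq_complex_re]
  · refine Integrable.of_bound (by fun_prop) 1 (Filter.Eventually.of_forall fun x => ?_)
    rw [← Complex.ofReal_mul, Complex.norm_exp_ofReal_mul_I]

theorem hk_cos {d : ℕ} {t : ℝ} 
    (γ : Measure (Fin d → ℝ)) [IsProbabilityMeasure γ]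
    (hft : ∀ m : Fin d → ℤ,
      fourierStieltjes γ m = Complex.exp (-((∑ i, ((m i : ℝ)) ^ 2) * t))) (i : Fin d) (n : ℕ) :
    ∫ y, Real.cos (n * y i) ∂γ = Real.exp (-(n ^ 2 * t)) := by
  have h := hft (Pi.single i (n : ℤ))
  unfold fourierStieltjes at h
  have e1 : ∀ x : Fin d → ℝ, ∑ j, ((Pi.single i (n : ℤ) : Fin d → ℤ) j : ℂ) * (x j : ℂ) =
      ((n * x i : ℝ) : ℂ) := by
    intro x
    rw [Finset.sum_eq_single i]
    · simp
    · intro j _ hj; simp [hj]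
    · simp
  have e2 : ∑ j, (((Pi.single i (n : ℤ) : Fin d → ℤ) j : ℝ)) ^ 2 = (n : ℝ) ^ 2 := by
    rw [Finset.sum_eq_single i]
    · simp
    · intro j _ hj; simp [hj]
    · simp
  simp_rw [e1] at h
  rw [e2] at h
  have h2 := congrArg Complex.re h
  rw [← RCLike.re_eq_complex_re, ← integral_re] at h2
  · have e : ∀ x : ℝ, RCLike.re (Complex.exp (Complex.I * (x : ℂ))) = Real.cos x := by
      intro x
      rw [mul_comm, RCLike.re_eq_complex_re, Complex.exp_ofReal_mul_I_re]
    simp_rw [e] at h2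
    rw [h2, ← Complex.exp_ofReal_re]
    simp [RCLike.re_eq_complex_re]
  · refine Integrable.of_bound (Continuous.aestronglyMeasurable (by fun_prop)) 1 (Filter.Eventually.of_forall fun x => ?_)
    rw [mul_comm, Complex.norm_exp_ofReal_mul_I]

theorem hk_gauss_sq (v : NNReal) :
    Integrable (fun x : ℝ => x ^ 2) (ProbabilityTheory.gaussianReal 0 v) ∧
    ∫ x, x ^ 2 ∂(ProbabilityTheory.gaussianReal 0 v) = v := by
  have hm := ProbabilityTheory.memLp_id_gaussianReal (μ := 0) (v := v) 2
  refine ⟨hm.integrable_sq, ?_⟩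
  have h := ProbabilityTheory.variance_eq_sub hm
  rw [ProbabilityTheory.variance_id_gaussianReal] at h
  simpa using h.symm

/-- The second moment of the heat kernel measure `γ_t` on `Q^d` (the probability
measure on `Q^d` characterized by `f_{γ_t}(m) = e^{−|m|²t}`) is at most `2dt`. -/
theorem heat_kernel_second_moment {d : ℕ} {t : ℝ} (ht : 0 < t)
    (γ : Measure (Fin d → ℝ)) [IsProbabilityMeasure γ] (hsupp : γ (Qcube d)ᶜ = 0)
    (hft : ∀ m : Fin d → ℤ,
      fourierStieltjes γ m = Complex.exp (-((∑ i, ((m i : ℝ)) ^ 2) * t))) :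
    ∫ y, (∑ i, y i ^ 2) ∂γ ≤ 2 * d * t := by
  have hae : ∀ᵐ y ∂γ, y ∈ Qcube d := hsupp
  have hint : ∀ i : Fin d, Integrable (fun y : Fin d → ℝ => y i ^ 2) γ := by
    intro i
    refine Integrable.of_bound (Continuous.aestronglyMeasurable (by fun_prop)) (π ^ 2) ?_
    filter_upwards [hae] with y hy
    rw [Real.norm_eq_abs, abs_of_nonneg (sq_nonneg _)]
    exact sq_le_sq' (hy i).1.le (hy i).2
  rw [integral_finsetSum _ (fun i _ => hint i)]
  have key : ∀ i : Fin d, ∫ y, y i ^ 2 ∂γ ≤ 2 * t := by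
    intro i
    set v : NNReal := ⟨2 * t, by positivity⟩ with hv
    have hvc : (v : ℝ) = 2 * t := rfl
    obtain ⟨g1, g2⟩ := hk_gauss_sq v
    have h1 := hkS_integral γ (fun y => y i) (by fun_prop)
    have h2 := hkS_integral (ProbabilityTheory.gaussianReal 0 v) (fun y => y) (by fun_prop)
    have h3 : ∫ y, hkS (y i) ∂γ = ∫ x, hkS x ∂(ProbabilityTheory.gaussianReal 0 v) := by
      rw [h1, h2]
      congr 1; ext n
      rw [hk_cos γ hft, hk_gauss_cos, hvc]
      congr 4; ring
    have h4 : ∫ y, hkS (y i) ∂γ = ∫ y, (y i ^ 2 / 4 - π ^ 2 / 12) ∂γ := by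
      apply integral_congr_ae
      filter_upwards [hae] with y hy
      exact hkS_eq ⟨(hy i).1.le, (hy i).2⟩
    have h5 : ∫ x, hkS x ∂(ProbabilityTheory.gaussianReal 0 v) ≤
        ∫ x, (x ^ 2 / 4 - π ^ 2 / 12) ∂(ProbabilityTheory.gaussianReal 0 v) := by
      apply integral_mono _ _ hkS_le
      · exact Integrable.of_bound hkS_cont.aestronglyMeasurable _
          (Filter.Eventually.of_forall hkS_bdd)
      · exact (g1.div_const 4).sub (integrable_const _)
    rw [integral_sub ((hint i).div_const 4) (integrable_const _), integral_div] at h4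
    rw [integral_sub (g1.div_const 4) (integrable_const _), integral_div, g2, hvc] at h5
    simp only [integral_const, probReal_univ, one_smul] at h4 h5
    linarith
  calc _ ≤ ∑ i : Fin d, 2 * t := Finset.sum_le_sum fun i _ => key i
    _ = 2 * d * t := by simp; ring
end
end

section
/- For any Borel probability measure μ on Q^d and any t > 0, the heat-kernel smoothed measure μ_t = μ * γ_t satisfies W̃₁(μ, μ_t) ≤ √(2dt). -/
open MeasureTheory Real ENNReal

noncomputable section

/-- The one-dimensional torus distance on `(−π,π]`. -/
def rhoCircle (s t : ℝ) : ℝ := min |s - t| (2 * π - |s - t|)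

/-- The geodesic distance on the torus `Q^d = (−π,π]^d`. -/
def rhoTorus {d : ℕ} (x y : Fin d → ℝ) : ℝ :=
  Real.sqrt (∑ i, rhoCircle (x i) (y i) ^ 2)

/-- Torus Kantorovich distance `W̃₁`. -/
def W1tilde {d : ℕ} (μ ν : Measure (Fin d → ℝ)) : ℝ≥0∞ := transportCost rhoTorus μ ν

/-- A function on `ℝ^d` is `2π`-periodic. -/
def IsPeriodic {d : ℕ} (g : (Fin d → ℝ) → ℝ) : Prop :=
  ∀ (x : Fin d → ℝ) (m : Fin d → ℤ), g (fun i => x i + 2 * π * m i) = g x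

lemma torus_measure_ext {d : ℕ} {P P' : Measure (UnitAddTorus (Fin d))}
    [IsFiniteMeasure P] [IsFiniteMeasure P']
    (h : ∀ m : Fin d → ℤ, ∫ u, UnitAddTorus.mFourier m u ∂P = ∫ u, UnitAddTorus.mFourier m u ∂P') :
    P = P' := by
  have hI : ∀ (Q : Measure (UnitAddTorus (Fin d))) [IsFiniteMeasure Q]
      (f : C(UnitAddTorus (Fin d), ℂ)), Integrable (fun u => f u) Q := fun Q _ f =>
    (BoundedContinuousFunction.mkOfCompact f).integrable Q
  refine ext_of_forall_mem_subalgebra_integral_eq_of_pseudoEMetric_complete_countable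
    (A := (UnitAddTorus.mFourierSubalgebra (Fin d)).comap
      (BoundedContinuousFunction.toContinuousMapStarₐ ℂ)) ?_ ?_
  · intro x y hxy
    obtain ⟨_, ⟨f, hf, rfl⟩, hne⟩ := UnitAddTorus.mFourierSubalgebra_separatesPoints hxy
    refine ⟨_, ⟨f, ⟨BoundedContinuousFunction.mkOfCompact f, ?_, ?_⟩, rfl⟩, hne⟩
    · exact hf
    · rfl
  · intro g hg
    have hg' : (g.toContinuousMap) ∈ Submodule.span ℂ
        (Set.range (UnitAddTorus.mFourier (d := Fin d))) := by
      rw [← UnitAddTorus.mFourierSubalgebra_coe]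
      exact hg
    have key : ∀ f ∈ Submodule.span ℂ (Set.range (UnitAddTorus.mFourier (d := Fin d))),
        ∫ u, f u ∂P = ∫ u, f u ∂P' := by
      intro f hf
      induction hf using Submodule.span_induction with
      | mem x hx => obtain ⟨m, rfl⟩ := hx; exact h m
      | zero => simp
      | add x y _ _ hx hy =>
        simp only [ContinuousMap.add_apply]
        rw [integral_add (hI P x) (hI P y), integral_add (hI P' x) (hI P' y), hx, hy]
      | smul a x _ hx =>
        simp only [ContinuousMap.smul_apply]
        rw [integral_smul, integral_smul, hx]
    exact key _ hg'

def tproj {d : ℕ} (x : Fin d → ℝ) : UnitAddTorus (Fin d) :=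
  fun i => ((x i / (2 * π) : ℝ) : AddCircle (1 : ℝ))

def tsec {d : ℕ} (u : UnitAddTorus (Fin d)) : Fin d → ℝ :=
  fun i => 2 * π * ((AddCircle.measurableEquivIoc 1 (-(1/2)) (u i) : Set.Ioc _ _) : ℝ)

lemma measurable_tproj {d : ℕ} : Measurable (tproj (d := d)) := by
  refine measurable_pi_lambda _ fun i => ?_
  exact (AddCircle.measurable_mk' (a := (1:ℝ))).comp (by fun_prop)

lemma measurable_tsec {d : ℕ} : Measurable (tsec (d := d)) := by
  refine measurable_pi_lambda _ fun i => ?_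
  refine Measurable.const_mul ?_ _
  exact measurable_subtype_coe.comp
    ((AddCircle.measurableEquivIoc 1 (-(1/2))).measurable.comp (measurable_pi_apply i))

lemma tproj_tsec {d : ℕ} (u : UnitAddTorus (Fin d)) : tproj (tsec u) = u := by
  funext i
  simp only [tproj, tsec]
  rw [mul_div_cancel_left₀ _ (by positivity)]
  exact AddCircle.coe_equivIoc

lemma tsec_mem {d : ℕ} (u : UnitAddTorus (Fin d)) : tsec u ∈ Qcube d := by
  intro i
  have h := (AddCircle.measurableEquivIoc 1 (-(1/2)) (u i)).2
  simp only [tsec]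
  have := Real.pi_pos
  constructor
  · have := h.1; nlinarith
  · have := h.2; nlinarith

lemma tproj_eq {d : ℕ} {x y : Fin d → ℝ} (h : tproj x = tproj y) (i : Fin d) :
    ∃ k : ℤ, x i - y i = 2 * π * k := by
  have h := congrFun h i
  simp only [tproj] at h
  rw [← sub_eq_zero, ← AddCircle.coe_sub, AddCircle.coe_eq_zero_iff] at h
  obtain ⟨n, hn⟩ := h
  refine ⟨n, ?_⟩
  have := Real.pi_pos
  simp at hn
  field_simp at hn
  linarith

lemma int_abs_ge {k : ℤ} (h : k ≠ 0) : (1:ℝ) ≤ |(k:ℝ)| := by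
  exact_mod_cast Int.one_le_abs h

lemma tsec_tproj {d : ℕ} {x : Fin d → ℝ} (hx : x ∈ Qcube d) : tsec (tproj x) = x := by
  funext i
  obtain ⟨k, hk⟩ := tproj_eq (tproj_tsec (tproj x)) i
  have h1 := tsec_mem (tproj x) i
  have h2 := hx i
  have hk0 : k = 0 := by
    by_contra hne
    have := int_abs_ge hne
    have hp := Real.pi_pos
    have h3 : |tsec (tproj x) i - x i| < 2 * π := by
      rw [abs_lt]; constructor <;> linarith [h1.1, h1.2, h2.1, h2.2]
    rw [hk, abs_mul, abs_of_pos (by positivity : 0 < 2 * π)] at h3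
    nlinarith
  rw [hk0] at hk
  simp at hk
  linarith

def tchar {d : ℕ} (m : Fin d → ℤ) (x : Fin d → ℝ) : ℂ :=
  Complex.exp (Complex.I * ∑ i, (m i : ℂ) * (x i : ℂ))

lemma tchar_eq {d : ℕ} (m : Fin d → ℤ) (x : Fin d → ℝ) :
    UnitAddTorus.mFourier m (tproj x) = tchar m x := by
  simp only [UnitAddTorus.mFourier, ContinuousMap.coe_mk, tproj, tchar]
  rw [Finset.mul_sum, Complex.exp_sum]
  refine Finset.prod_congr rfl fun i _ => ?_
  rw [fourier_coe_apply]
  congr 1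
  have : (π : ℂ) ≠ 0 := by exact_mod_cast Real.pi_ne_zero
  push_cast
  field_simp

lemma continuous_tchar {d : ℕ} (m : Fin d → ℤ) : Continuous (tchar m) := by
  unfold tchar; fun_prop

lemma norm_tchar {d : ℕ} (m : Fin d → ℤ) (x : Fin d → ℝ) : ‖tchar m x‖ = 1 := by
  have : tchar m x = Complex.exp (((∑ i, (m i : ℝ) * x i : ℝ) : ℂ) * Complex.I) := by
    simp only [tchar]; congr 1; push_cast; ring
  rw [this, Complex.norm_exp_ofReal_mul_I]

lemma integrable_tchar {d : ℕ} (m : Fin d → ℤ) {Ω : Type*} [MeasurableSpace Ω] (P : Measure Ω)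
    [IsFiniteMeasure P] {f : Ω → Fin d → ℝ} (hf : Measurable f) :
    Integrable (fun ω => tchar m (f ω)) P := by
  refine Integrable.of_bound (C := 1)
    ((continuous_tchar m).measurable.comp hf).aestronglyMeasurable ?_
  exact Filter.Eventually.of_forall fun ω => (norm_tchar m _).le

lemma tchar_sub {d : ℕ} (m : Fin d → ℤ) (x y : Fin d → ℝ) :
    tchar m (x - y) = tchar m x * tchar (-m) y := by
  simp only [tchar]
  rw [← Complex.exp_add, ← mul_add, ← Finset.sum_add_distrib]
  congr 2
  refine Finset.sum_congr rfl fun i _ => ?_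
  simp only [Pi.sub_apply, Pi.neg_apply]
  push_cast
  ring

lemma tchar_periodic {d : ℕ} (m : Fin d → ℤ) (x : Fin d → ℝ) (k : Fin d → ℤ) :
    tchar m (fun i => x i + 2 * π * k i) = tchar m x := by
  rw [← tchar_eq, ← tchar_eq]
  congr 1
  funext i
  simp only [tproj]
  rw [← sub_eq_zero, ← AddCircle.coe_sub, AddCircle.coe_eq_zero_iff]
  refine ⟨k i, ?_⟩
  have := Real.pi_pos
  simp
  field_simp
  ring

lemma conv_tchar {d : ℕ} (m : Fin d → ℤ) (μ γ μt : Measure (Fin d → ℝ))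
    [IsProbabilityMeasure μ] [IsProbabilityMeasure γ] [IsProbabilityMeasure μt]
    (hconv : ∀ g : (Fin d → ℝ) → ℝ, Continuous g → IsPeriodic g →
      ∫ z, g z ∂μt = ∫ x, ∫ y, g (x - y) ∂γ ∂μ) :
    ∫ z, tchar m z ∂μt = (∫ x, tchar m x ∂μ) * ∫ y, tchar (-m) y ∂γ := by
  have hin : ∀ x, ∫ y, tchar m (x - y) ∂γ = tchar m x * ∫ y, tchar (-m) y ∂γ := by
    intro x
    simp_rw [tchar_sub]
    rw [integral_const_mul]
  have e : (∫ x, tchar m x ∂μ) * ∫ y, tchar (-m) y ∂γ = ∫ x, ∫ y, tchar m (x - y) ∂γ ∂μ := by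
    simp_rw [hin]
    rw [integral_mul_const]
  have hI1 : ∀ x, Integrable (fun y => tchar m (x - y)) γ := fun x =>
    integrable_tchar m γ (by fun_prop)
  have hI2 : Integrable (fun x => ∫ y, tchar m (x - y) ∂γ) μ := by
    simp_rw [hin]
    exact (integrable_tchar m μ measurable_id).mul_const _
  have hI3 : Integrable (fun x => tchar m x) μt := integrable_tchar m μt measurable_id
  rw [e]
  apply Complex.ext
  · have h := hconv (fun x => (tchar m x).re) (Complex.continuous_re.comp (continuous_tchar m))
      (fun x k => by simp only [tchar_periodic])
    have h1 := integral_re hI3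
    have h2 := integral_re hI2
    have h3 := fun x => integral_re (hI1 x)
    simp only [RCLike.re_to_complex] at h1 h2 h3
    rw [← h1, ← h2, h]
    simp_rw [h3]
  · have h := hconv (fun x => (tchar m x).im) (Complex.continuous_im.comp (continuous_tchar m))
      (fun x k => by simp only [tchar_periodic])
    have h1 := integral_im hI3
    have h2 := integral_im hI2
    have h3 := fun x => integral_im (hI1 x)
    simp only [RCLike.im_to_complex] at h1 h2 h3
    rw [← h1, ← h2, h]
    simp_rw [h3]

def gaussD (d : ℕ) (t : ℝ) : Measure (Fin d → ℝ) :=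
  Measure.pi (fun _ => ProbabilityTheory.gaussianReal 0 (2 * t).toNNReal)

instance (d : ℕ) (t : ℝ) : IsProbabilityMeasure (gaussD d t) := by
  unfold gaussD; infer_instance

lemma gauss_tchar {d : ℕ} {t : ℝ} (ht : 0 < t) (m : Fin d → ℤ) :
    ∫ y, tchar m y ∂(gaussD d t) = Complex.exp (-(((∑ i, ((m i : ℝ)) ^ 2) * t : ℝ) : ℂ)) := by
  have : ∀ y : Fin d → ℝ, tchar m y =
      ∏ i, Complex.exp (((m i : ℝ) : ℂ) * (y i : ℂ) * Complex.I) := by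
    intro y
    simp only [tchar]
    rw [Finset.mul_sum, Complex.exp_sum]
    refine Finset.prod_congr rfl fun i _ => ?_
    congr 1; push_cast; ring
  simp_rw [this, gaussD]
  rw [integral_fintype_prod_eq_prod
    (fun i (y : ℝ) => Complex.exp (((m i : ℝ) : ℂ) * (y : ℂ) * Complex.I))]
  simp_rw [← charFun_apply_real, ProbabilityTheory.charFun_gaussianReal]
  rw [← Complex.exp_sum]
  congr 1
  rw [Real.coe_toNNReal _ (by positivity)]
  push_cast
  rw [Finset.sum_mul, ← Finset.sum_neg_distrib]
  refine Finset.sum_congr rfl fun i _ => ?_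
  ring

lemma gauss_sq {d : ℕ} {t : ℝ} (ht : 0 < t) (i : Fin d) :
    Integrable (fun y => (y i) ^ 2) (gaussD d t) ∧ ∫ y, (y i) ^ 2 ∂(gaussD d t) = 2 * t := by
  have hm := ProbabilityTheory.memLp_id_gaussianReal' (μ := 0) (v := (2 * t).toNNReal) 2 (by simp)
  have hv := ProbabilityTheory.variance_eq_sub hm
  rw [ProbabilityTheory.variance_id_gaussianReal, Real.coe_toNNReal _ (by positivity)] at hv
  constructor
  · exact integrable_comp_eval (X := fun _ : Fin d => ℝ) (i := i)
      (μ := fun _ => ProbabilityTheory.gaussianReal 0 (2 * t).toNNReal) (f := fun y : ℝ => y ^ 2) hm.integrable_sq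
  · unfold gaussD
    rw [integral_comp_eval (X := fun _ : Fin d => ℝ) (i := i)
      (μ := fun _ => ProbabilityTheory.gaussianReal 0 (2 * t).toNNReal) (f := fun y : ℝ => y ^ 2) (by fun_prop)]
    simp at hv
    exact hv.symm

lemma gauss_lintegral {d : ℕ} {t : ℝ} (ht : 0 < t) :
    ∫⁻ y, ENNReal.ofReal (Real.sqrt (∑ i, (y i) ^ 2)) ∂(gaussD d t) ≤
      ENNReal.ofReal (Real.sqrt (2 * d * t)) := by
  have hs : Integrable (fun y : Fin d → ℝ => ∑ i, (y i) ^ 2) (gaussD d t) :=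
    integrable_finsetSum _ fun i _ => (gauss_sq ht i).1
  have hv : ∫ y : Fin d → ℝ, ∑ i, (y i) ^ 2 ∂(gaussD d t) = 2 * d * t := by
    rw [integral_finsetSum _ fun i _ => (gauss_sq ht i).1]
    simp_rw [(gauss_sq ht _).2]
    simp; ring
  have hsq : ∀ y : Fin d → ℝ, (Real.sqrt (∑ i, (y i) ^ 2)) ^ 2 = ∑ i, (y i) ^ 2 :=
    fun y => Real.sq_sqrt (by positivity)
  have hL : MemLp (fun y : Fin d → ℝ => Real.sqrt (∑ i, (y i) ^ 2)) 2 (gaussD d t) := by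
    rw [memLp_two_iff_integrable_sq
      (Measurable.aestronglyMeasurable (by fun_prop))]
    simp_rw [hsq]; exact hs
  rw [← ofReal_integral_eq_lintegral_ofReal (hL.integrable (by norm_num))
    (Filter.Eventually.of_forall fun y => Real.sqrt_nonneg _)]
  apply ENNReal.ofReal_le_ofReal
  apply Real.le_sqrt_of_sq_le
  have h0 := ProbabilityTheory.variance_nonneg
    (fun y : Fin d → ℝ => Real.sqrt (∑ i, (y i) ^ 2)) (gaussD d t)
  rw [ProbabilityTheory.variance_eq_sub hL] at h0
  simp only [Pi.pow_apply, hsq, hv] at h0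
  linarith

lemma rhoCircle_le {x z g : ℝ} (hx : x ∈ Set.Ioc (-π) π) (hz : z ∈ Set.Ioc (-π) π)
    (k : ℤ) (hk : z - (x - g) = 2 * π * k) : rhoCircle x z ^ 2 ≤ g ^ 2 := by
  have hp := Real.pi_pos
  have h3 : |x - z| < 2 * π := by
    rw [abs_lt]; constructor <;> linarith [hx.1, hx.2, hz.1, hz.2]
  have h0 : 0 ≤ rhoCircle x z := le_min (abs_nonneg _) (by linarith)
  rw [← sq_abs g]
  refine pow_le_pow_left₀ h0 ?_ 2
  by_cases h : k = 0
  · refine (min_le_left _ _).trans ?_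
    rw [h] at hk
    simp at hk
    rw [show x - z = g by linarith]
  · refine (min_le_right _ _).trans ?_
    have h1 := int_abs_ge h
    have h2 : 2 * π * |(k:ℝ)| ≤ |g| + |x - z| := by
      rw [← abs_of_pos (by positivity : 0 < 2 * π), ← abs_mul, ← hk,
        show z - (x - g) = g - (x - z) by ring]
      exact abs_sub _ _
    nlinarith

/-- Smoothing estimate: for any probability measure `μ` on `Q^d` and any `t > 0`,
the heat-kernel smoothed measure `μ_t = μ * γ_t` satisfies `W̃₁(μ, μ_t) ≤ √(2dt)`.
Here `γ` is the heat kernel measure `γ_t` (characterized by its Fourier–Stieltjes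
transform `e^{−|m|²t}`, with density `p_t`), and `μt` is characterized by
`∫ g dμ_t = ∫∫ g(x−y) p_t(y) dy dμ(x)` for all `2π`-periodic continuous `g`. -/
theorem W1tilde_heat_smoothing {d : ℕ} {t : ℝ} (ht : 0 < t)
    (μ : Measure (Fin d → ℝ)) [IsProbabilityMeasure μ] (hμ : μ (Qcube d)ᶜ = 0)
    (γ : Measure (Fin d → ℝ)) [IsProbabilityMeasure γ] (hγsupp : γ (Qcube d)ᶜ = 0)
    (hγft : ∀ m : Fin d → ℤ,
      fourierStieltjes γ m = Complex.exp (-(((∑ i, ((m i : ℝ)) ^ 2) * t : ℝ) : ℂ)))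
    (μt : Measure (Fin d → ℝ)) [IsProbabilityMeasure μt] (hμt : μt (Qcube d)ᶜ = 0)
    (hconv : ∀ g : (Fin d → ℝ) → ℝ, Continuous g → IsPeriodic g →
      ∫ z, g z ∂μt = ∫ x, ∫ y, g (x - y) ∂γ ∂μ) :
    W1tilde μ μt ≤ ENNReal.ofReal (Real.sqrt (2 * d * t)) := by
  classical
  let W : (Fin d → ℝ) × (Fin d → ℝ) → UnitAddTorus (Fin d) := fun p => tproj (p.1 - p.2)
  have hW : Measurable W := measurable_tproj.comp (by fun_prop)
  have hP : (μ.prod (gaussD d t)).map W = μt.map tproj := by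
    have : IsProbabilityMeasure ((μ.prod (gaussD d t)).map W) :=
      Measure.isProbabilityMeasure_map hW.aemeasurable
    have : IsProbabilityMeasure (μt.map tproj) :=
      Measure.isProbabilityMeasure_map measurable_tproj.aemeasurable
    refine torus_measure_ext fun m => ?_
    rw [integral_map hW.aemeasurable
        (UnitAddTorus.mFourier m).continuous.measurable.aestronglyMeasurable,
      integral_map measurable_tproj.aemeasurable
        (UnitAddTorus.mFourier m).continuous.measurable.aestronglyMeasurable]
    simp only [W, tchar_eq]
    rw [conv_tchar m μ γ μt hconv]
    have hg : ∫ y, tchar (-m) y ∂γ = ∫ y, tchar (-m) y ∂(gaussD d t) := by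
      rw [gauss_tchar ht]; exact hγft (-m)
    rw [hg, ← integral_prod_mul]
    simp_rw [tchar_sub]
  let F : (Fin d → ℝ) × (Fin d → ℝ) → (Fin d → ℝ) × (Fin d → ℝ) := fun p => (p.1, tsec (W p))
  have hF : Measurable F := measurable_fst.prodMk (measurable_tsec.comp hW)
  have hcoup : IsCoupling ((μ.prod (gaussD d t)).map F) μ μt := by
    constructor
    · rw [Measure.map_map measurable_fst hF]
      change Measure.map Prod.fst _ = _
      rw [Measure.map_fst_prod]; simp
    · rw [Measure.map_map measurable_snd hF]
      change Measure.map (tsec ∘ W) _ = _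
      rw [← Measure.map_map measurable_tsec hW, hP, Measure.map_map measurable_tsec measurable_tproj]
      have : (tsec ∘ tproj : (Fin d → ℝ) → _) =ᵐ[μt] id := by
        have h : ∀ᵐ x ∂μt, x ∈ Qcube d := hμt
        filter_upwards [h] with x hx
        exact tsec_tproj hx
      rw [Measure.map_congr this, Measure.map_id]
  unfold W1tilde transportCost
  refine le_trans (iInf₂_le ((μ.prod (gaussD d t)).map F) hcoup) ?_
  have hm : Measurable (fun p : (Fin d → ℝ) × (Fin d → ℝ) =>
      ENNReal.ofReal (rhoTorus p.1 p.2)) := by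
    unfold rhoTorus rhoCircle
    fun_prop
  rw [lintegral_map hm hF]
  have hae : ∀ᵐ p ∂(μ.prod (gaussD d t)), p.1 ∈ Qcube d := by
    have h : ∀ᵐ x ∂μ, x ∈ Qcube d := hμ
    exact Measure.quasiMeasurePreserving_fst.ae h
  calc ∫⁻ p, ENNReal.ofReal (rhoTorus (F p).1 (F p).2) ∂(μ.prod (gaussD d t))
      ≤ ∫⁻ p, ENNReal.ofReal (Real.sqrt (∑ i, (p.2 i) ^ 2)) ∂(μ.prod (gaussD d t)) := by
        refine lintegral_mono_ae ?_
        filter_upwards [hae] with p hp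
        apply ENNReal.ofReal_le_ofReal
        apply Real.sqrt_le_sqrt
        refine Finset.sum_le_sum fun i _ => ?_
        obtain ⟨k, hk⟩ := tproj_eq (tproj_tsec (W p)) i
        exact rhoCircle_le (hp i) (tsec_mem _ i) k hk
    _ = ∫⁻ y, ENNReal.ofReal (Real.sqrt (∑ i, (y i) ^ 2)) ∂(gaussD d t) := by
        rw [lintegral_prod _ (by fun_prop)]
        simp
    _ ≤ _ := gauss_lintegral ht
end
end

section
/- (Proposition 2.) Given two Borel probability measures μ and ν on Q^d with Fourier–Stieltjes transforms f_μ and f_ν, for any t > 0 one has W̃₁(μ,ν) ≤ ( Σ_{m ∈ ℤ^d, m ≠ 0} (1/|m|²) e^{−2|m|²t} |f_μ(m) − f_ν(m)|² )^{1/2} + 2√(2dt). Moreover, the same inequality holds with W₁(μ,ν) in place of W̃₁(μ,ν) if μ and ν are supported on [0,π]^d. -/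
open MeasureTheory Real ENNReal

noncomputable section

open scoped CompactlySupported

section Duality

variable {X : Type*} [TopologicalSpace X]

/-- `φ ⊕ ψ`. -/
def osum (φ ψ : C(X, ℝ)) : C(X × X, ℝ) :=
  φ.comp ContinuousMap.fst + ψ.comp ContinuousMap.snd

lemma osum_apply (φ ψ : C(X, ℝ)) (p : X × X) : osum φ ψ p = φ p.1 + ψ p.2 := rfl

lemma exists_rep {Y : Type*} [TopologicalSpace Y] [CompactSpace Y] [T2Space Y]
    [MeasurableSpace Y] [BorelSpace Y] (L : C(Y, ℝ) →ₗ[ℝ] ℝ) (hL : ∀ h, 0 ≤ h → 0 ≤ L h) :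
    ∃ γ : Measure Y, IsFiniteMeasure γ ∧ ∀ h : C(Y, ℝ), ∫ p, h p ∂γ = L h := by
  let L' : C_c(Y, ℝ) →ₗ[ℝ] ℝ :=
    { toFun := fun f => L f.toContinuousMap
      map_add' := fun f g => by
        rw [← map_add]; rfl
      map_smul' := fun a g => by
        rw [RingHom.id_apply, ← map_smul]; rfl }
  let Λ : C_c(Y, ℝ) →ₚ[ℝ] ℝ := PositiveLinearMap.mk₀ L' (fun f hf => hL _ hf)
  refine ⟨RealRMK.rieszMeasure Λ, inferInstance, fun h => ?_⟩
  exact RealRMK.integral_rieszMeasure Λ (CompactlySupportedContinuousMap.continuousMapEquiv h)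

variable [MeasurableSpace X] 

def ubSet (μ ν : Measure X) (c : C(X × X, ℝ)) (V : ℝ) (h : C(X × X, ℝ)) : Set ℝ :=
  {r | ∃ (φ ψ : C(X, ℝ)) (l : ℝ), 0 ≤ l ∧ h ≤ osum φ ψ + l • c ∧
    r = ∫ x, φ x ∂μ + ∫ x, ψ x ∂ν + l * V}

variable [CompactSpace X] [T2Space X] [SecondCountableTopology X] [BorelSpace X]

lemma integrable_cm (μ : Measure X) [IsFiniteMeasure μ] (φ : C(X, ℝ)) :
    Integrable (fun x => φ x) μ :=
  φ.continuous.integrable_of_hasCompactSupport (HasCompactSupport.of_compactSpace _)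

theorem duality (μ ν : Measure X) [IsProbabilityMeasure μ] [IsProbabilityMeasure ν]
    (c : C(X × X, ℝ)) (hc : 0 ≤ c) (V : ℝ) 
    (hV : ∀ φ ψ : C(X, ℝ), osum φ ψ ≤ c → ∫ x, φ x ∂μ + ∫ x, ψ x ∂ν ≤ V) :
    ∃ γ : Measure (X × X), IsCoupling γ μ ν ∧ ∫⁻ p, ENNReal.ofReal (c p) ∂γ ≤ ENNReal.ofReal V := by
  have hV' : ∀ (l : ℝ), 0 ≤ l → ∀ φ ψ : C(X, ℝ), osum φ ψ ≤ l • c →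
      ∫ x, φ x ∂μ + ∫ x, ψ x ∂ν ≤ l * V := by
    have key : ∀ (l : ℝ), 0 < l → ∀ φ ψ : C(X, ℝ), osum φ ψ ≤ l • c →
      ∫ x, φ x ∂μ + ∫ x, ψ x ∂ν ≤ l * V := by
      intro l hl φ ψ h
      have := hV (l⁻¹ • φ) (l⁻¹ • ψ) (by
        intro p
        have := h p
        simp only [ContinuousMap.toFun_eq_coe, osum_apply, ContinuousMap.smul_apply, smul_eq_mul] at this ⊢
        rw [← mul_add]
        rwa [inv_mul_le_iff₀ hl])
      simp only [ContinuousMap.smul_apply, smul_eq_mul, integral_const_mul] at this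
      rw [← mul_add, inv_mul_le_iff₀ hl] at this
      exact this
    intro l hl φ ψ h
    refine le_of_forall_pos_le_add fun ε hε => ?_
    have hδ : 0 < ε / (|V| + 1) := by positivity
    refine (key (l + ε / (|V| + 1)) (by positivity) φ ψ ?_).trans ?_
    · refine h.trans ?_
      intro p
      simp only [ContinuousMap.smul_apply, smul_eq_mul]
      exact mul_le_mul_of_nonneg_right (by linarith) (hc p)
    · rw [add_mul]
      gcongr
      calc ε / (|V| + 1) * V ≤ ε / (|V| + 1) * (|V| + 1) := by
            gcongr; linarith [le_abs_self V]
        _ = ε := by field_simp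
  set N : C(X × X, ℝ) → ℝ := fun h => sInf (ubSet μ ν c V h) with hN
  have hbdd : ∀ h, BddBelow (ubSet μ ν c V h) := by
    intro h
    refine ⟨-‖h‖, ?_⟩
    rintro r ⟨φ, ψ, l, hl, hh, rfl⟩
    have := hV' l hl (-φ - ContinuousMap.const X ‖h‖) (-ψ) (by
      intro p
      have h1 := hh p
      have h2 := (abs_le.1 (h.norm_coe_le_norm p)).1
      simp only [ContinuousMap.toFun_eq_coe, osum_apply, ContinuousMap.smul_apply, smul_eq_mul, ContinuousMap.add_apply, ContinuousMap.sub_apply, ContinuousMap.neg_apply, ContinuousMap.const_apply] at h1 h2 ⊢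
      linarith)
    simp only [ContinuousMap.sub_apply, ContinuousMap.neg_apply, ContinuousMap.const_apply] at this
    rw [integral_sub (f := fun x => -φ x) (integrable_cm μ φ).neg (integrable_const _), integral_neg, integral_neg] at this
    simp at this
    linarith
  have hne : ∀ h, (ubSet μ ν c V h).Nonempty := by
    intro h
    refine ⟨_, ContinuousMap.const X ‖h‖, 0, 0, le_rfl, ?_, rfl⟩
    intro p
    have h2 := (abs_le.1 (h.norm_coe_le_norm p)).2
    simpa [osum_apply] using h2
  have hhom1 : ∀ a : ℝ, 0 < a → ∀ h, N (a • h) ≤ a * N h := by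
    intro a ha h
    rw [← div_le_iff₀' ha]
    refine le_csInf (hne h) ?_
    rintro r ⟨φ, ψ, l, hl, hh, rfl⟩
    rw [div_le_iff₀' ha]
    refine csInf_le (hbdd _) ⟨a • φ, a • ψ, a * l, by positivity, ?_, ?_⟩
    · intro p
      have := mul_le_mul_of_nonneg_left (hh p) ha.le
      simp only [ContinuousMap.toFun_eq_coe, osum_apply, ContinuousMap.smul_apply, smul_eq_mul, ContinuousMap.add_apply] at this ⊢
      linarith
    · simp only [ContinuousMap.smul_apply, smul_eq_mul, integral_const_mul]; ring
  have hhom : ∀ a : ℝ, 0 < a → ∀ h, N (a • h) = a * N h := by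
    intro a ha h
    refine le_antisymm (hhom1 a ha h) ?_
    have := hhom1 a⁻¹ (by positivity) (a • h)
    rw [smul_smul, inv_mul_cancel₀ ha.ne', one_smul, inv_mul_eq_div, le_div_iff₀' ha] at this
    exact this
  have hadd : ∀ g h, N (g + h) ≤ N g + N h := by
    intro g h
    rw [← sub_le_iff_le_add]
    refine le_csInf (hne g) ?_
    rintro r ⟨φ, ψ, l, hl, hh, rfl⟩
    rw [sub_le_comm]
    refine le_csInf (hne h) ?_
    rintro r ⟨φ', ψ', l', hl', hh', rfl⟩
    rw [sub_le_iff_le_add]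
    refine csInf_le (hbdd _) ⟨φ + φ', ψ + ψ', l + l', by positivity, ?_, ?_⟩
    · intro p
      have := hh p
      have := hh' p
      simp only [ContinuousMap.toFun_eq_coe, osum_apply, ContinuousMap.smul_apply, smul_eq_mul, ContinuousMap.add_apply] at *
      linarith
    · simp only [ContinuousMap.add_apply]
      rw [integral_add (integrable_cm μ φ) (integrable_cm μ φ'), integral_add (integrable_cm ν ψ) (integrable_cm ν ψ')]; ring
  have hN0 : N 0 = 0 := by
    have := hhom 2 (by norm_num) 0
    rw [smul_zero] at this; linarith
  obtain ⟨L, -, hL⟩ := exists_extension_of_le_sublinear (⊥ : C(X × X, ℝ) →ₗ.[ℝ] ℝ) N hhom hadd (by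
    rintro ⟨x, hx⟩
    have : x = 0 := by
      exact (Submodule.mem_bot ℝ).1 hx
    subst this
    have : (⊥ : C(X × X, ℝ) →ₗ.[ℝ] ℝ) ⟨0, hx⟩ = 0 := LinearPMap.map_zero _
    rw [this, hN0])
  have hL' : ∀ h, ∀ r ∈ ubSet μ ν c V h, L h ≤ r := fun h r hr => (hL h).trans (csInf_le (hbdd h) hr)
  have hpos : ∀ h, 0 ≤ h → 0 ≤ L h := by
    intro h hh
    have := hL' (-h) 0 ⟨0, 0, 0, le_rfl, by intro p; simpa [osum_apply] using hh p, by simp⟩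
    rw [map_neg] at this; linarith
  obtain ⟨γ, hγ, hγL⟩ := exists_rep L hpos
  have hcV : L c ≤ V := hL' c V ⟨0, 0, 1, zero_le_one, by intro p; simp [osum_apply], by simp⟩
  have h1 : ∀ φ, L (osum φ 0) = ∫ x, φ x ∂μ := by
    have h : ∀ φ, L (osum φ 0) ≤ ∫ x, φ x ∂μ := fun φ =>
      hL' _ _ ⟨φ, 0, 0, le_rfl, by simp, by simp⟩
    intro φ
    refine le_antisymm (h φ) ?_
    have h2 := h (-φ)
    have : osum (-φ) 0 = - osum φ 0 := by ext p; simp [osum_apply]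
    rw [this, map_neg] at h2
    simp only [ContinuousMap.neg_apply, integral_neg] at h2
    linarith
  have h2 : ∀ φ, L (osum 0 φ) = ∫ x, φ x ∂ν := by
    have h : ∀ φ, L (osum 0 φ) ≤ ∫ x, φ x ∂ν := fun φ =>
      hL' _ _ ⟨0, φ, 0, le_rfl, by simp, by simp⟩
    intro φ
    refine le_antisymm (h φ) ?_
    have h2 := h (-φ)
    have : osum 0 (-φ) = - osum 0 φ := by ext p; simp [osum_apply]
    rw [this, map_neg] at h2
    simp only [ContinuousMap.neg_apply, integral_neg] at h2
    linarith
  refine ⟨γ, ⟨?_, ?_⟩, ?_⟩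
  · have := Measure.isFiniteMeasure_map γ (Prod.fst : X × X → X)
    refine ext_of_forall_integral_eq_of_IsFiniteMeasure fun f => ?_
    rw [integral_map measurable_fst.aemeasurable f.continuous.aestronglyMeasurable]
    refine Eq.trans ?_ (h1 f.toContinuousMap)
    rw [← hγL]
    simp [osum_apply]
  · have := Measure.isFiniteMeasure_map γ (Prod.snd : X × X → X)
    refine ext_of_forall_integral_eq_of_IsFiniteMeasure fun f => ?_
    rw [integral_map measurable_snd.aemeasurable f.continuous.aestronglyMeasurable]
    refine Eq.trans ?_ (h2 f.toContinuousMap)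
    rw [← hγL]
    simp [osum_apply]
  · rw [← ofReal_integral_eq_lintegral_ofReal (integrable_cm γ c) (Filter.Eventually.of_forall hc), hγL]
    exact ENNReal.ofReal_le_ofReal hcV

end Duality

section KR

variable {X : Type*} [TopologicalSpace X] [MeasurableSpace X]
variable [CompactSpace X] [T2Space X] [SecondCountableTopology X] [BorelSpace X]

theorem kr_duality (μ ν : Measure X) [IsProbabilityMeasure μ] [IsProbabilityMeasure ν]
    (c : C(X × X, ℝ)) (hc : 0 ≤ c) (hdiag : ∀ x, c (x, x) = 0)
    (hsymm : ∀ x y, c (x, y) = c (y, x))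
    (htri : ∀ x y z, c (x, z) ≤ c (x, y) + c (y, z)) (V : ℝ)
    (hV : ∀ F : C(X, ℝ), (∀ x y, F x - F y ≤ c (x, y)) → ∫ x, F x ∂μ - ∫ x, F x ∂ν ≤ V) :
    ∃ γ : Measure (X × X), IsCoupling γ μ ν ∧
      ∫⁻ p, ENNReal.ofReal (c p) ∂γ ≤ ENNReal.ofReal V := by
  refine duality μ ν c hc V fun φ ψ h => ?_
  have h' : ∀ x y, φ x + ψ y ≤ c (x, y) := fun x y => h (x, y)
  have hne : Nonempty X := by
    by_contra hX
    rw [not_nonempty_iff] at hX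
    have := measure_univ (μ := μ)
    simp [Set.univ_eq_empty_iff.2 hX] at this
  set G : X → ℝ := fun x => ⨅ y, c (x, y) - ψ y with hG
  have hb : ∀ x, BddBelow (Set.range fun y => c (x, y) - ψ y) := by
    intro x
    refine ⟨φ x, ?_⟩
    rintro _ ⟨y, rfl⟩
    have := h' x y
    simp only
    linarith
  have hlip : ∀ x y, G x - G y ≤ c (x, y) := by
    intro x y
    rw [sub_le_comm]
    refine le_ciInf fun z => ?_
    have h1 : G x ≤ c (x, z) - ψ z := ciInf_le (hb x) z
    have := htri x y z
    linarith
  have hcont : Continuous G := by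
    rw [continuous_iff_continuousAt]
    intro x
    rw [ContinuousAt, tendsto_iff_dist_tendsto_zero]
    have hlim : Filter.Tendsto (fun y => c (y, x)) (nhds x) (nhds 0) := by
      have : Continuous fun y => c (y, x) := by fun_prop
      have := this.tendsto x
      rwa [hdiag] at this
    refine squeeze_zero (fun _ => dist_nonneg) (fun y => ?_) hlim
    rw [Real.dist_eq, abs_le]
    have h1 := hlip x y
    have h2 := hlip y x
    rw [hsymm] at h1
    constructor <;> linarith
  have := hV ⟨G, hcont⟩ hlip
  refine le_trans ?_ this
  have h1 : ∫ x, φ x ∂μ ≤ ∫ x, (⟨G, hcont⟩ : C(X, ℝ)) x ∂μ := by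
    refine integral_mono (integrable_cm μ φ) (integrable_cm μ _) fun x => ?_
    refine le_ciInf fun y => ?_
    have := h' x y
    linarith
  have h2 : ∫ x, ψ x ∂ν ≤ ∫ x, -(⟨G, hcont⟩ : C(X, ℝ)) x ∂ν := by
    refine integral_mono (integrable_cm ν ψ) (integrable_cm ν _).neg fun x => ?_
    have h1 : G x ≤ c (x, x) - ψ x := ciInf_le (hb x) x
    rw [hdiag] at h1
    have : (⟨G, hcont⟩ : C(X, ℝ)) x = G x := rfl
    simp only [this]
    linarith
  rw [integral_neg] at h2
  linarith

end KR

section Torus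

/-- sqrt of sum of squares is monotone-subadditive -/
lemma sqrt_sum_tri {d : ℕ} (a b c : Fin d → ℝ) (ha : ∀ i, 0 ≤ a i) (h : ∀ i, a i ≤ b i + c i) :
    √(∑ i, a i ^ 2) ≤ √(∑ i, b i ^ 2) + √(∑ i, c i ^ 2) := by
  have h1 := norm_add_le (WithLp.toLp 2 b : EuclideanSpace ℝ (Fin d)) (WithLp.toLp 2 c)
  simp only [EuclideanSpace.norm_eq, Real.norm_eq_abs, sq_abs, PiLp.add_apply] at h1
  refine le_trans (Real.sqrt_le_sqrt ?_) h1
  refine Finset.sum_le_sum fun i _ => ?_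
  exact pow_le_pow_left₀ (ha i) (h i) 2

/-- torus cost -/
def tc {d : ℕ} : C(UnitAddTorus (Fin d) × UnitAddTorus (Fin d), ℝ) where
  toFun p := 2 * π * √(∑ i, ‖p.1 i - p.2 i‖ ^ 2)
  continuous_toFun := by fun_prop

lemma tc_apply {d : ℕ} (x y : UnitAddTorus (Fin d)) :
    tc (x, y) = 2 * π * √(∑ i, ‖x i - y i‖ ^ 2) := rfl

lemma tc_nonneg {d : ℕ} : (0 : C(UnitAddTorus (Fin d) × UnitAddTorus (Fin d), ℝ)) ≤ tc := by
  intro p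
  change 0 ≤ 2 * π * √(∑ i, ‖p.1 i - p.2 i‖ ^ 2)
  positivity

lemma tc_diag {d : ℕ} (x : UnitAddTorus (Fin d)) : tc (x, x) = 0 := by
  simp [tc_apply]

lemma tc_symm {d : ℕ} (x y : UnitAddTorus (Fin d)) : tc (x, y) = tc (y, x) := by
  simp only [tc_apply, norm_sub_rev]

lemma tc_tri {d : ℕ} (x y z : UnitAddTorus (Fin d)) : tc (x, z) ≤ tc (x, y) + tc (y, z) := by
  simp only [tc_apply, ← mul_add]
  refine mul_le_mul_of_nonneg_left ?_ (by positivity)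
  exact sqrt_sum_tri _ _ _ (fun i => norm_nonneg _) (fun i => norm_sub_le_norm_sub_add_norm_sub _ _ _)

/-- projection to the torus -/
def pr {d : ℕ} (x : Fin d → ℝ) : UnitAddTorus (Fin d) := fun i => ((x i / (2 * π) : ℝ) : UnitAddCircle)

lemma continuous_pr {d : ℕ} : Continuous (pr (d := d)) := by
  unfold pr
  refine continuous_pi fun i => ?_
  exact (AddCircle.continuous_mk' 1).comp (by fun_prop)

lemma norm_coe_le (x : ℝ) : ‖(x : UnitAddCircle)‖ ≤ |x| := by
  rw [UnitAddCircle.norm_eq]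
  simpa using round_le x 0

lemma tc_add_pr {d : ℕ} (x : UnitAddTorus (Fin d)) (g : Fin d → ℝ) :
    tc (x, x + pr g) ≤ √(∑ i, g i ^ 2) := by
  rw [tc_apply]
  have : √(∑ i, ‖x i - (x + pr g) i‖ ^ 2) ≤ √((∑ i, g i ^ 2) / (2 * π) ^ 2) := by
    refine Real.sqrt_le_sqrt ?_
    rw [Finset.sum_div]
    refine Finset.sum_le_sum fun i _ => ?_
    rw [← div_pow, ← sq_abs (g i / (2 * π))]
    refine pow_le_pow_left₀ (norm_nonneg _) ?_ 2
    rw [Pi.add_apply, sub_add_cancel_left, norm_neg]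
    exact norm_coe_le _
  rw [Real.sqrt_div' _ (by positivity), Real.sqrt_sq (by positivity), le_div_iff₀' (by positivity)] at this
  exact this

/-- section of `pr` -/
def sec {d : ℕ} (x : UnitAddTorus (Fin d)) : Fin d → ℝ :=
  fun i => 2 * π * (AddCircle.measurableEquivIoc 1 (-(1/2)) (x i) : ℝ)

lemma measurable_sec {d : ℕ} : Measurable (sec (d := d)) := by
  unfold sec
  refine measurable_pi_lambda _ fun i => ?_
  exact (measurable_subtype_coe.comp ((AddCircle.measurableEquivIoc 1 (-(1/2))).measurable.comp
    (measurable_pi_apply i))).const_mul _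

lemma sec_mem {d : ℕ} (x : UnitAddTorus (Fin d)) : sec x ∈ Qcube d := by
  intro i
  have := (AddCircle.measurableEquivIoc 1 (-(1/2)) (x i)).2
  unfold sec
  have hp := Real.pi_pos
  constructor <;> nlinarith [this.1, this.2]

lemma pr_sec {d : ℕ} (x : UnitAddTorus (Fin d)) : pr (sec x) = x := by
  funext i
  unfold pr sec
  rw [mul_div_cancel_left₀ _ (by positivity)]
  exact (AddCircle.measurableEquivIoc 1 (-(1/2))).symm_apply_apply (x i)

lemma sec_pr {d : ℕ} (x : Fin d → ℝ) (hx : x ∈ Qcube d) : sec (pr x) = x := by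
  funext i
  unfold pr sec
  have hp := Real.pi_pos
  have hmem : x i / (2 * π) ∈ Set.Ioc (-(1/2) : ℝ) (-(1/2) + 1) := by
    have := hx i
    constructor
    · rw [lt_div_iff₀ (by positivity)]; linarith [this.1]
    · rw [div_le_iff₀ (by positivity)]; linarith [this.2]
  have := (AddCircle.measurableEquivIoc 1 (-(1/2))).apply_symm_apply ⟨_, hmem⟩
  have h2 : AddCircle.measurableEquivIoc 1 (-(1/2)) ((x i / (2 * π) : ℝ) : UnitAddCircle) = ⟨_, hmem⟩ := this
  rw [h2]
  field_simp

lemma rho_eq (s t : ℝ) (hs : s ∈ Set.Ioc (-π) π) (ht : t ∈ Set.Ioc (-π) π) :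
    rhoCircle s t = 2 * π * ‖((s / (2 * π) : ℝ) : UnitAddCircle) - ((t / (2 * π) : ℝ) : UnitAddCircle)‖ := by
  have hp := Real.pi_pos
  rw [← AddCircle.coe_sub]
  unfold rhoCircle
  rw [← sub_div, ← abs_of_pos (show 0 < 2 * π by positivity)]
  set r := s - t with hr
  have h1 : |r| < 2 * π := by rw [abs_lt]; constructor <;> linarith [hs.1, hs.2, ht.1, ht.2]
  rw [abs_of_pos (show 0 < 2 * π by positivity)]
  rcases le_total |r| π with h | h
  · rw [min_eq_left (by linarith)]
    have : ‖((r / (2 * π) : ℝ) : UnitAddCircle)‖ = |r / (2 * π)| := by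
      rw [AddCircle.norm_coe_eq_abs_iff 1 one_ne_zero, abs_div, abs_of_pos (show 0 < 2 * π by positivity), abs_one, div_le_iff₀ (by positivity)]
      linarith
    rw [this, abs_div, abs_of_pos (show 0 < 2 * π by positivity)]
    field_simp
  · rw [min_eq_right (by linarith)]
    have key : ∀ u : ℝ, π ≤ u → u < 2 * π → ‖((u / (2 * π) : ℝ) : UnitAddCircle)‖ = (2 * π - u) / (2 * π) := by
      intro u hu hu2
      have e : ((u / (2 * π) : ℝ) : UnitAddCircle) = ((-((2 * π - u) / (2 * π)) : ℝ) : UnitAddCircle) := by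
        have : u / (2 * π) = -((2 * π - u) / (2 * π)) + 1 := by field_simp; ring
        rw [this, AddCircle.coe_add, AddCircle.coe_period, add_zero]
      have h0 : 0 ≤ (2 * π - u) / (2 * π) := div_nonneg (by linarith) (by positivity)
      rw [e, AddCircle.coe_neg, norm_neg, (AddCircle.norm_coe_eq_abs_iff 1 one_ne_zero).2, abs_of_nonneg h0]
      rw [abs_of_nonneg h0, abs_one, div_le_iff₀ (by positivity)]
      linarith
    have : ‖((r / (2 * π) : ℝ) : UnitAddCircle)‖ = (2 * π - |r|) / (2 * π) := by
      rcases abs_cases r with ⟨h3, _⟩ | ⟨h3, _⟩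
      · rw [h3]; exact key r (by linarith) (by linarith)
      · rw [h3, ← key (-r) (by linarith) (by linarith), neg_div, AddCircle.coe_neg, norm_neg]
    rw [this]
    field_simp

lemma rhoTorus_sec {d : ℕ} (x y : UnitAddTorus (Fin d)) : rhoTorus (sec x) (sec y) = tc (x, y) := by
  rw [tc_apply]
  unfold rhoTorus
  have : ∀ i, rhoCircle (sec x i) (sec y i) ^ 2 = (2 * π) ^ 2 * ‖x i - y i‖ ^ 2 := by
    intro i
    rw [rho_eq _ _ (sec_mem x i) (sec_mem y i), mul_pow]
    have h1 := congrFun (pr_sec x) i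
    have h2 := congrFun (pr_sec y) i
    unfold pr at h1 h2
    rw [h1, h2]
  simp only [this]
  rw [← Finset.mul_sum, Real.sqrt_mul (by positivity), Real.sqrt_sq (by positivity)]

theorem exists_coupling_of_bound {d : ℕ} (μ ν : Measure (Fin d → ℝ)) [IsProbabilityMeasure μ]
    [IsProbabilityMeasure ν] (hμ : μ (Qcube d)ᶜ = 0) (hν : ν (Qcube d)ᶜ = 0) (V : ℝ)
    (hV : ∀ F : C(UnitAddTorus (Fin d), ℝ), (∀ x y, F x - F y ≤ tc (x, y)) →
      ∫ x, F (pr x) ∂μ - ∫ x, F (pr x) ∂ν ≤ V) :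
    ∃ γ : Measure ((Fin d → ℝ) × (Fin d → ℝ)), IsCoupling γ μ ν ∧
      ∫⁻ p, ENNReal.ofReal (rhoTorus p.1 p.2) ∂γ ≤ ENNReal.ofReal V := by
  have hm : Measurable (pr (d := d)) := continuous_pr.measurable
  have : IsProbabilityMeasure (μ.map pr) := Measure.isProbabilityMeasure_map hm.aemeasurable
  have : IsProbabilityMeasure (ν.map pr) := Measure.isProbabilityMeasure_map hm.aemeasurable
  obtain ⟨γ, hγ, hle⟩ := kr_duality (μ.map pr) (ν.map pr) tc tc_nonneg tc_diag tc_symm tc_tri V (by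
    intro F hF
    rw [integral_map hm.aemeasurable F.continuous.aestronglyMeasurable,
      integral_map hm.aemeasurable F.continuous.aestronglyMeasurable]
    exact hV F hF)
  have hback : ∀ m : Measure (Fin d → ℝ), m (Qcube d)ᶜ = 0 → (m.map pr).map sec = m := by
    intro m h0
    rw [Measure.map_map measurable_sec hm]
    have : sec ∘ pr =ᵐ[m] id := by
      have h1 : ∀ᵐ x ∂m, x ∈ Qcube d := h0
      filter_upwards [h1] with x hx
      exact sec_pr x hx
    rw [Measure.map_congr this, Measure.map_id]
  have hs : Measurable (Prod.map (sec (d := d)) (sec (d := d))) := measurable_sec.prodMap measurable_sec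
  refine ⟨γ.map (Prod.map sec sec), ⟨?_, ?_⟩, ?_⟩
  · rw [Measure.map_map measurable_fst hs, ← hback μ hμ, ← hγ.1, Measure.map_map measurable_sec measurable_fst]
    rfl
  · rw [Measure.map_map measurable_snd hs, ← hback ν hν, ← hγ.2, Measure.map_map measurable_sec measurable_snd]
    rfl
  · rw [lintegral_map _ hs]
    · simpa [rhoTorus_sec] using hle
    · unfold rhoTorus rhoCircle
      fun_prop

end Torus

section Fourier

open UnitAddTorus

local instance instMSC : MeasureSpace UnitAddCircle := ⟨AddCircle.haarAddCircle⟩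

local instance instHaarC : Measure.IsAddHaarMeasure (volume : Measure UnitAddCircle) :=
  inferInstanceAs (Measure.IsAddHaarMeasure AddCircle.haarAddCircle)

local instance instProbC : IsProbabilityMeasure (volume : Measure UnitAddCircle) :=
  inferInstanceAs (IsProbabilityMeasure AddCircle.haarAddCircle)

variable {d : ℕ}

lemma mFourier_add_pt (m : Fin d → ℤ) (x h : UnitAddTorus (Fin d)) :
    mFourier m (x + h) = mFourier m x * mFourier m h := by
  simp [mFourier, fourier_apply, smul_add, AddCircle.toCircle_add, Finset.prod_mul_distrib]

lemma mFourier_norm_pt (m : Fin d → ℤ) (x : UnitAddTorus (Fin d)) : ‖mFourier m x‖ = 1 := by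
  simp only [mFourier, fourier_apply, ContinuousMap.coe_mk, norm_prod, Circle.norm_coe,
    Finset.prod_const_one]

lemma mFourier_coe (m : Fin d → ℤ) (y : Fin d → ℝ) :
    mFourier m (fun i => (y i : UnitAddCircle)) =
      Complex.exp (∑ i, 2 * π * Complex.I * m i * y i) := by
  simp [mFourier, fourier_coe_apply, Complex.exp_sum]

lemma mFourier_pr (m : Fin d → ℤ) (x : Fin d → ℝ) :
    mFourier m (pr x) = Complex.exp (Complex.I * ∑ i, (m i : ℂ) * (x i : ℂ)) := by
  unfold pr
  rw [mFourier_coe m (fun i => x i / (2 * π)), Finset.mul_sum]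
  congr 1
  refine Finset.sum_congr rfl fun i _ => ?_
  have : (π : ℂ) ≠ 0 := by exact_mod_cast Real.pi_ne_zero
  push_cast
  field_simp

lemma coeff_translate (F : UnitAddTorus (Fin d) → ℂ) (h : UnitAddTorus (Fin d)) (m : Fin d → ℤ) :
    mFourierCoeff (fun x => F (x + h)) m = mFourier m h * mFourierCoeff F m := by
  unfold mFourierCoeff
  rw [← integral_const_mul,
    ← integral_add_right_eq_self (fun x => mFourier m h * (mFourier (-m) x • F x)) h]
  refine integral_congr_ae (Filter.Eventually.of_forall fun x => ?_)
  have h1 : mFourier m h * mFourier (-m) h = 1 := by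
    rw [← mFourier_add, add_neg_cancel, mFourier_zero]; rfl
  simp only [mFourier_add_pt, smul_eq_mul]
  linear_combination (-mFourier (-m) x * F (x + h)) * h1


/-- complexification -/
def cx (F : C(UnitAddTorus (Fin d), ℝ)) : C(UnitAddTorus (Fin d), ℂ) :=
  ⟨fun x => (F x : ℂ), by fun_prop⟩

lemma integrable_cmc {X : Type*} [TopologicalSpace X] [CompactSpace X] [T2Space X]
    [MeasurableSpace X] [BorelSpace X] (μ : Measure X) [IsFiniteMeasure μ] (φ : C(X, ℂ)) :
    Integrable (fun x => φ x) μ :=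
  φ.continuous.integrable_of_hasCompactSupport (HasCompactSupport.of_compactSpace _)

lemma coeff_diff (F : C(UnitAddTorus (Fin d), ℂ)) (h : UnitAddTorus (Fin d)) (m : Fin d → ℤ) :
    mFourierCoeff (fun x => F (x + h) - F x) m = (mFourier m h - 1) * mFourierCoeff F m := by
  rw [sub_mul, one_mul, ← coeff_translate]
  unfold mFourierCoeff
  simp only [smul_sub]
  rw [integral_sub]
  · exact integrable_cmc volume (mFourier (-m) * F.comp ⟨fun x => x + h, by fun_prop⟩)
  · exact integrable_cmc volume (mFourier (-m) * F)

lemma bessel_diff (F : C(UnitAddTorus (Fin d), ℝ)) (h : UnitAddTorus (Fin d))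
    (A : Finset (Fin d → ℤ)) :
    ∑ m ∈ A, ‖mFourier m h - 1‖ ^ 2 * ‖mFourierCoeff (cx F) m‖ ^ 2 ≤
      ∫ x, (F (x + h) - F x) ^ 2 := by
  let G : C(UnitAddTorus (Fin d), ℂ) :=
    ⟨fun x => cx F (x + h) - cx F x, by fun_prop⟩
  have h1 := hasSum_sq_mFourierCoeff (ContinuousMap.toLp 2 volume ℂ G)
  have h2 := sum_le_hasSum A (fun _ _ => by positivity) h1
  have h3 : ∫ t, ‖(ContinuousMap.toLp 2 volume ℂ G) t‖ ^ 2 = ∫ x, (F (x + h) - F x) ^ 2 := by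
    refine integral_congr_ae ?_
    filter_upwards [ContinuousMap.coeFn_toLp (p := 2) (𝕜 := ℂ) volume G] with x hx
    rw [hx]
    change ‖((F (x + h) : ℝ) : ℂ) - ((F x : ℝ) : ℂ)‖ ^ 2 = _
    rw [← Complex.ofReal_sub, Complex.norm_real, Real.norm_eq_abs, sq_abs]
  rw [h3] at h2
  refine le_trans (le_of_eq ?_) h2
  refine Finset.sum_congr rfl fun m _ => ?_
  rw [mFourierCoeff_toLp, ← mul_pow, ← norm_mul, ← coeff_diff]
  rfl

/-- embedding of the `i`th axis -/
def ax (i : Fin d) (s : ℝ) : Fin d → ℝ := Pi.single i s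

/-- unit quotient map -/
def qm (y : Fin d → ℝ) : UnitAddTorus (Fin d) := fun i => (y i : UnitAddCircle)

lemma qm_add (x y : Fin d → ℝ) : qm (x + y) = qm x + qm y := by
  funext i; simp [qm]

lemma continuous_qm : Continuous (qm (d := d)) := by
  unfold qm
  refine continuous_pi fun i => ?_
  exact (AddCircle.continuous_mk' 1).comp (by fun_prop)

lemma tc_qm (x y : Fin d → ℝ) : tc (qm x, qm y) ≤ 2 * π * √(∑ i, (x i - y i) ^ 2) := by
  rw [tc_apply]
  refine mul_le_mul_of_nonneg_left (Real.sqrt_le_sqrt (Finset.sum_le_sum fun i _ => ?_)) (by positivity)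
  rw [← sq_abs (x i - y i)]
  refine pow_le_pow_left₀ (norm_nonneg _) ?_ 2
  unfold qm
  rw [← AddCircle.coe_sub]
  exact norm_coe_le _

lemma mFourier_ax (m : Fin d → ℤ) (i : Fin d) (s : ℝ) :
    mFourier m (qm (ax i s)) = Complex.exp (2 * π * Complex.I * m i * s) := by
  unfold qm
  rw [mFourier_coe, Finset.sum_eq_single i]
  · simp [ax]
  · intro j _ hj; simp [ax, hj]
  · simp

lemma lim_char (k : ℤ) : Filter.Tendsto (fun n : ℕ => 
    ‖Complex.exp (2 * π * Complex.I * k * ((1 / (n + 1 : ℝ) : ℝ) : ℂ)) - 1‖ ^ 2 / (1 / (n + 1 : ℝ)) ^ 2) Filter.atTop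
    (nhds ((2 * π) ^ 2 * (k : ℝ) ^ 2)) := by
  have hd : HasDerivAt (fun s : ℝ => Complex.exp (2 * π * Complex.I * k * (s : ℂ)))
      (2 * π * Complex.I * k) 0 := by
    have h1 : HasDerivAt (fun z : ℂ => Complex.exp (2 * π * Complex.I * k * z))
      (2 * π * Complex.I * k) ((0 : ℝ) : ℂ) := by
      have := ((hasDerivAt_id ((0 : ℝ) : ℂ)).const_mul (2 * π * Complex.I * k)).cexp
      simpa using this
    exact h1.comp_ofReal
  have h2 := hd.tendsto_slope_zero.norm.pow 2
  have h3 : Filter.Tendsto (fun n : ℕ => (1 / (n + 1 : ℝ))) Filter.atTop (nhdsWithin 0 {0}ᶜ) := by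
    rw [tendsto_nhdsWithin_iff]
    refine ⟨tendsto_one_div_add_atTop_nhds_zero_nat, Filter.Eventually.of_forall fun n => ?_⟩
    have : (0 : ℝ) < 1 / (n + 1 : ℝ) := by positivity
    exact this.ne'
  have h4 := h2.comp h3
  refine (h4.congr fun n => ?_).trans (le_of_eq ?_)
  · simp only [Function.comp, zero_add, norm_smul, mul_pow, Complex.ofReal_zero, mul_zero, Complex.exp_zero, norm_inv, inv_pow, Real.norm_eq_abs, sq_abs]
    rw [mul_comm, ← div_eq_mul_inv]
  · congr 1
    simp [mul_pow]

lemma energy (F : C(UnitAddTorus (Fin d), ℝ)) (hF : ∀ x y, F x - F y ≤ tc (x, y))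
    (A : Finset (Fin d → ℤ)) :
    ∑ m ∈ A, (∑ i, (m i : ℝ) ^ 2) * ‖mFourierCoeff (cx F) m‖ ^ 2 ≤ 1 := by
  have hpi := Real.pi_pos
  set s : ℕ → ℝ := fun n => 1 / (n + 1 : ℝ) with hs
  have hspos : ∀ n, 0 < s n := fun n => by simp only [hs]; positivity
  let f : EuclideanSpace ℝ (Fin d) → ℝ := fun z => F (qm z.ofLp)
  have hlip0 : ∀ x y : Fin d → ℝ, |F (qm x) - F (qm y)| ≤ 2 * π * √(∑ i, (x i - y i) ^ 2) := by
    intro x y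
    refine le_trans ?_ (tc_qm x y)
    rw [abs_le]
    have h1 := hF (qm x) (qm y)
    have h2 := hF (qm y) (qm x)
    rw [tc_symm] at h2
    constructor <;> linarith
  have hlip : LipschitzWith (Real.toNNReal (2 * π)) f := by
    refine LipschitzWith.of_dist_le_mul fun x y => ?_
    rw [Real.coe_toNNReal _ (by positivity), EuclideanSpace.dist_eq, Real.dist_eq]
    simp only [Real.dist_eq, sq_abs]
    exact hlip0 _ _
  have hae : ∀ᵐ y : Fin d → ℝ, DifferentiableAt ℝ f (WithLp.toLp 2 y) :=
    (PiLp.volume_preserving_toLp (Fin d)).quasiMeasurePreserving.ae hlip.ae_differentiableAt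
  -- integrals
  let C : Set (Fin d → ℝ) := {x | ∀ i, x i ∈ Set.Ioc ((fun _ => (0 : ℝ)) i) ((fun _ => (0 : ℝ)) i + 1)}
  have hC : volume C = 1 := by
    have := lintegral_preimage (fun _ : UnitAddTorus (Fin d) => 1) (fun _ => (0 : ℝ))
    simp only [lintegral_const, measure_univ, mul_one, one_mul, Measure.restrict_apply_univ] at this
    exact this.symm
  have : IsProbabilityMeasure ((volume : Measure (Fin d → ℝ)).restrict C) := ⟨by simp [hC]⟩
  let Q : ℕ → (Fin d → ℝ) → ℝ := fun n y => ∑ i, ((F (qm (y + ax i (s n))) - F (qm y)) / s n) ^ 2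
  have hquot : ∀ n y i, ((F (qm (y + ax i (s n))) - F (qm y)) / s n) ^ 2 ≤ (2 * π) ^ 2 := by
    intro n y i
    have h1 := hlip0 (y + ax i (s n)) y
    have h2 : ∑ j, ((y + ax i (s n)) j - y j) ^ 2 = s n ^ 2 := by
      rw [Finset.sum_eq_single i]
      · simp [ax]
      · intro j _ hj; simp [ax, hj]
      · simp
    rw [h2, Real.sqrt_sq (hspos n).le] at h1
    rw [← sq_abs, abs_div, abs_of_pos (hspos n)]
    refine pow_le_pow_left₀ (by have := hspos n; positivity) ?_ 2
    rw [div_le_iff₀ (hspos n)]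
    exact h1
  have hle : ∀ n, ∑ m ∈ A, (∑ i, ‖Complex.exp (2 * π * Complex.I * m i * ((s n : ℝ) : ℂ)) - 1‖ ^ 2 / s n ^ 2) *
      ‖mFourierCoeff (cx F) m‖ ^ 2 ≤ ∫ y in C, Q n y := by
    intro n
    simp only [Finset.sum_mul]
    rw [Finset.sum_comm]
    have e : ∫ y in C, Q n y = ∑ i, (∫ x, (F (x + qm (ax i (s n))) - F x) ^ 2) / s n ^ 2 := by
      simp only [Q, div_pow]
      rw [integral_finsetSum]
      · refine Finset.sum_congr rfl fun i _ => ?_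
        rw [integral_div]
        congr 1
        rw [integral_preimage _ (fun _ => (0 : ℝ))]
        simp only [qm_add]
        rfl
      · intro i _
        refine Integrable.mono' (integrable_const ((2 * π) ^ 2)) ?_ (Filter.Eventually.of_forall fun y => ?_)
        · refine Continuous.aestronglyMeasurable ?_
          have := continuous_qm (d := d)
          fun_prop
        · have := hquot n y i
          rw [div_pow] at this
          rwa [Real.norm_of_nonneg (by have := hspos n; positivity)]
    rw [e]
    refine Finset.sum_le_sum fun i _ => ?_
    rw [le_div_iff₀ (by have := hspos n; positivity), Finset.sum_mul]
    refine le_trans (le_of_eq ?_) (bessel_diff F (qm (ax i (s n))) A)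
    refine Finset.sum_congr rfl fun m _ => ?_
    rw [mFourier_ax]
    have := (hspos n).ne'
    field_simp
  have hlimQ : ∀ᵐ y ∂((volume : Measure (Fin d → ℝ)).restrict C), Filter.Tendsto (fun n => Q n y) Filter.atTop
      (nhds (∑ i, (fderiv ℝ f (WithLp.toLp 2 y) (EuclideanSpace.single i 1)) ^ 2)) := by
    filter_upwards [ae_restrict_of_ae hae] with y hy
    refine tendsto_finsetSum _ fun i _ => Filter.Tendsto.pow ?_ 2
    have h1 := (hy.hasFDerivAt.hasLineDerivAt (EuclideanSpace.single i 1))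
    have h2 := HasDerivAt.tendsto_slope_zero h1
    have h3 : Filter.Tendsto s Filter.atTop (nhdsWithin 0 {0}ᶜ) := by
      rw [tendsto_nhdsWithin_iff]
      exact ⟨tendsto_one_div_add_atTop_nhds_zero_nat, Filter.Eventually.of_forall fun n => (hspos n).ne'⟩
    refine (h2.comp h3).congr fun n => ?_
    simp only [Function.comp, zero_add, zero_smul, add_zero, smul_eq_mul]
    have e : (WithLp.toLp 2 y + s n • EuclideanSpace.single i (1 : ℝ) : EuclideanSpace ℝ (Fin d)).ofLp
        = y + ax i (s n) := by
      funext j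
      by_cases hj : j = i
      · subst hj; simp [ax]
      · simp [ax, hj]
    simp only [f, e]
    rw [inv_mul_eq_div]
  have hgrad : ∀ z, ∑ i, (fderiv ℝ f z (EuclideanSpace.single i 1)) ^ 2 ≤ (2 * π) ^ 2 := by
    intro z
    set L := fderiv ℝ f z with hL
    have hn : ‖L‖ ≤ 2 * π := by
      have := norm_fderiv_le_of_lipschitz ℝ hlip (x₀ := z)
      rwa [Real.coe_toNNReal _ (by positivity)] at this
    set S := ∑ i, (L (EuclideanSpace.single i 1)) ^ 2 with hS
    have hS0 : 0 ≤ S := Finset.sum_nonneg fun i _ => sq_nonneg _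
    let v : EuclideanSpace ℝ (Fin d) := WithLp.toLp 2 fun i => L (EuclideanSpace.single i 1)
    have hv : v = ∑ i, (L (EuclideanSpace.single i 1)) • EuclideanSpace.single i (1 : ℝ) := by
      have := (EuclideanSpace.basisFun (Fin d) ℝ).sum_repr v
      rw [← this]
      simp [v]
    have h1 : L v = S := by
      rw [hv, map_sum, hS]
      refine Finset.sum_congr rfl fun i _ => ?_
      rw [map_smul, smul_eq_mul, sq]
    have h2 : ‖v‖ = √S := by
      rw [EuclideanSpace.norm_eq]
      simp [v, hS]
    have h3 := L.le_opNorm v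
    rw [h1, h2, Real.norm_of_nonneg hS0] at h3
    have h4 : S ≤ 2 * π * √S := h3.trans (mul_le_mul_of_nonneg_right hn (Real.sqrt_nonneg _))
    have h5 := Real.sq_sqrt hS0
    have h6 := Real.sqrt_nonneg S
    rcases h6.eq_or_lt with h7 | h7
    · have h8 : S = 0 := by rw [← h5, ← h7]; ring
      rw [h8]; positivity
    · have : √S ≤ 2 * π := by
        refine le_of_mul_le_mul_right ?_ h7
        rw [← sq, h5]; exact h4
      rw [← h5]
      exact pow_le_pow_left₀ h6 this 2
  have hlimint := tendsto_integral_of_dominated_convergence (fun _ => d * (2 * π) ^ 2)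
    (F := Q) (μ := (volume : Measure (Fin d → ℝ)).restrict C) (by
      intro n
      refine Continuous.aestronglyMeasurable ?_
      have := continuous_qm (d := d)
      fun_prop) (integrable_const _) (by
      intro n
      refine Filter.Eventually.of_forall fun y => ?_
      rw [Real.norm_of_nonneg (Finset.sum_nonneg fun i _ => sq_nonneg _)]
      refine (Finset.sum_le_sum fun i _ => hquot n y i).trans ?_
      simp) hlimQ
  have hlimL : Filter.Tendsto (fun n => ∑ m ∈ A, (∑ i, ‖Complex.exp (2 * π * Complex.I * m i * ((s n : ℝ) : ℂ)) - 1‖ ^ 2 / s n ^ 2) *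
      ‖mFourierCoeff (cx F) m‖ ^ 2) Filter.atTop (nhds (∑ m ∈ A, (∑ i, (2 * π) ^ 2 * (m i : ℝ) ^ 2) * ‖mFourierCoeff (cx F) m‖ ^ 2)) := by
    refine tendsto_finsetSum _ fun m _ => Filter.Tendsto.mul_const _ ?_
    refine tendsto_finsetSum _ fun i _ => ?_
    exact lim_char (m i)
  have h1 := le_of_tendsto_of_tendsto' hlimL hlimint hle
  have h2 : ∫ y in C, (∑ i, (fderiv ℝ f (WithLp.toLp 2 y) (EuclideanSpace.single i 1)) ^ 2) ≤ (2 * π) ^ 2 := by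
    refine (integral_mono_of_nonneg (Filter.Eventually.of_forall fun y => Finset.sum_nonneg fun i _ => sq_nonneg _)
      (integrable_const ((2 * π) ^ 2)) (Filter.Eventually.of_forall fun y => hgrad _)).trans ?_
    simp
  have h3 := h1.trans h2
  simp only [← Finset.mul_sum, mul_assoc] at h3
  exact le_of_mul_le_mul_left (by simpa [mul_assoc] using h3) (show 0 < (2 * π) ^ 2 by positivity)


lemma summable_gauss1 {t : ℝ} (ht : 0 < t) :
    Summable (fun n : ℤ => Real.exp (-t * (n : ℝ) ^ 2)) := by
  have hN : Summable (fun n : ℕ => Real.exp (-t * (n : ℝ) ^ 2)) := by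
    refine Summable.of_nonneg_of_le (fun n => (Real.exp_pos _).le) (fun n => ?_)
      (summable_geometric_of_lt_one (Real.exp_pos (-t)).le
        (by simpa using Real.exp_lt_exp.mpr (by linarith : -t < 0)))
    rw [← Real.exp_nat_mul]
    refine Real.exp_le_exp.mpr ?_
    have h1 : (n : ℝ) ≤ (n : ℝ) ^ 2 := by exact_mod_cast Nat.le_self_pow (by norm_num) n
    nlinarith
  refine Summable.of_nat_of_neg ?_ ?_
  · simpa using hN
  · simpa using hN

lemma summable_gauss {t : ℝ} (ht : 0 < t) : ∀ d : ℕ,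
    Summable (fun m : Fin d → ℤ => Real.exp (-t * ∑ i, (m i : ℝ) ^ 2))
  | 0 => by exact (hasSum_fintype _).summable
  | d + 1 => by
      have h := (summable_gauss1 ht).mul_of_nonneg (summable_gauss ht d)
        (fun _ => (Real.exp_pos _).le) (fun _ => (Real.exp_pos _).le)
      rw [← (Fin.consEquiv (fun _ : Fin (d + 1) => ℤ)).summable_iff]
      refine h.congr fun p => ?_
      simp only [Function.comp, Fin.consEquiv, Equiv.coe_fn_mk, Fin.sum_univ_succ, Fin.cons_zero,
        Fin.cons_succ, ← Real.exp_add]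
      congr 1; ring

/-- Gaussian heat kernel measure -/
def gm (d : ℕ) (t : ℝ) : Measure (Fin d → ℝ) :=
  Measure.pi (fun _ : Fin d => ProbabilityTheory.gaussianReal 0 (2 * t).toNNReal)

instance instProbGm (d : ℕ) (t : ℝ) : IsProbabilityMeasure (gm d t) := by
  unfold gm; infer_instance

lemma gm_char {t : ℝ} (ht : 0 < t) (m : Fin d → ℤ) :
    ∫ g, mFourier m (pr g) ∂(gm d t) = ((Real.exp (-t * ∑ i, (m i : ℝ) ^ 2) : ℝ) : ℂ) := by
  have h1 : ∀ g : Fin d → ℝ, mFourier m (pr g) =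
      ∏ i, Complex.exp ((m i : ℝ) * (g i : ℂ) * Complex.I) := by
    intro g
    rw [mFourier_pr, ← Complex.exp_sum, Finset.mul_sum]
    congr 1
    refine Finset.sum_congr rfl fun i _ => ?_
    push_cast; ring
  simp_rw [h1]
  unfold gm
  rw [integral_fintype_prod_eq_prod
    (f := fun (i : Fin d) (x : ℝ) => Complex.exp ((m i : ℝ) * (x : ℂ) * Complex.I))]
  simp_rw [← charFun_apply_real, ProbabilityTheory.charFun_gaussianReal]
  rw [← Complex.exp_sum, Complex.ofReal_exp]
  congr 1
  push_cast
  rw [Finset.mul_sum]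
  refine Finset.sum_congr rfl fun i _ => ?_
  have : (((2 * t).toNNReal : ℝ) : ℂ) = 2 * t := by
    rw [Real.coe_toNNReal _ (by positivity)]; push_cast; rfl
  rw [this]; ring

lemma gm_second {t : ℝ} (ht : 0 < t) (i : Fin d) :
    Integrable (fun g : Fin d → ℝ => g i ^ 2) (gm d t) ∧ ∫ g, g i ^ 2 ∂(gm d t) = 2 * t := by
  have hL := ProbabilityTheory.memLp_id_gaussianReal (μ := 0) (v := (2 * t).toNNReal) 2
  have hI : Integrable (fun x : ℝ => x ^ 2) (ProbabilityTheory.gaussianReal 0 (2 * t).toNNReal) :=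
    hL.integrable_sq
  refine ⟨integrable_comp_eval (μ := fun _ : Fin d =>
    ProbabilityTheory.gaussianReal 0 (2 * t).toNNReal) (i := i) hI, ?_⟩
  unfold gm
  rw [integral_comp_eval (μ := fun _ : Fin d =>
    ProbabilityTheory.gaussianReal 0 (2 * t).toNNReal) (i := i) (f := fun x : ℝ => x ^ 2) hI.1]
  have h2 := ProbabilityTheory.variance_fun_id_gaussianReal (μ := 0) (v := (2 * t).toNNReal)
  rw [ProbabilityTheory.variance_eq_integral measurable_id'.aemeasurable] at h2
  simp only [ProbabilityTheory.integral_id_gaussianReal, sub_zero] at h2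
  rw [h2, Real.coe_toNNReal _ (by positivity)]

lemma gm_first {t : ℝ} (ht : 0 < t) :
    Integrable (fun g : Fin d → ℝ => √(∑ i, g i ^ 2)) (gm d t) ∧
      ∫ g, √(∑ i, g i ^ 2) ∂(gm d t) ≤ √(2 * d * t) := by
  have hS : Integrable (fun g : Fin d → ℝ => ∑ i, g i ^ 2) (gm d t) :=
    integrable_finset_sum _ fun i _ => (gm_second ht i).1
  have hSv : ∫ g, ∑ i, g i ^ 2 ∂(gm d t) = 2 * d * t := by
    rw [integral_finset_sum _ fun i _ => (gm_second ht i).1]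
    simp only [(gm_second ht _).2, Finset.sum_const, Finset.card_univ, Fintype.card_fin,
      nsmul_eq_mul]
    ring
  have hI : Integrable (fun g : Fin d → ℝ => √(∑ i, g i ^ 2)) (gm d t) := by
    refine (hS.add (integrable_const (1 : ℝ))).mono'
      (Continuous.aestronglyMeasurable (by fun_prop)) (Filter.Eventually.of_forall fun g => ?_)
    rw [Real.norm_of_nonneg (Real.sqrt_nonneg _)]
    have h0 : 0 ≤ ∑ i, g i ^ 2 := Finset.sum_nonneg fun i _ => sq_nonneg _
    have h1 := Real.sq_sqrt h0
    simp only [Pi.add_apply]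
    nlinarith [sq_nonneg (√(∑ i, g i ^ 2) - 1)]
  refine ⟨hI, Real.le_sqrt_of_sq_le ?_⟩
  rw [← hSv]
  have h3 : ∀ c : ℝ, c = ∫ g, √(∑ i, g i ^ 2) ∂(gm d t) → c ^ 2 ≤ ∫ g, ∑ i, g i ^ 2 ∂(gm d t) := by
    intro c hc
    have h4 : 2 * c * ∫ g, √(∑ i, g i ^ 2) ∂(gm d t) - c ^ 2 ≤ ∫ g, ∑ i, g i ^ 2 ∂(gm d t) := by
      have : 2 * c * ∫ g, √(∑ i, g i ^ 2) ∂(gm d t) - c ^ 2 =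
          ∫ g, (2 * c * √(∑ i, g i ^ 2) - c ^ 2) ∂(gm d t) := by
        rw [integral_sub (hI.const_mul _) (integrable_const _), integral_const_mul, integral_const]
        simp
      rw [this]
      refine integral_mono ((hI.const_mul _).sub (integrable_const _)) hS fun g => ?_
      have h0 : 0 ≤ ∑ i, g i ^ 2 := Finset.sum_nonneg fun i _ => sq_nonneg _
      have h1 := Real.sq_sqrt h0
      simp only
      nlinarith [sq_nonneg (√(∑ i, g i ^ 2) - c)]
    rw [← hc] at h4
    nlinarith
  exact h3 _ rfl

/-- heat smoothing -/
def smooth (F : C(UnitAddTorus (Fin d), ℝ)) (t : ℝ) : C(UnitAddTorus (Fin d), ℂ) where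
  toFun x := ∫ g, cx F (x + pr g) ∂(gm d t)
  continuous_toFun := by
    refine continuous_of_dominated (bound := fun _ => ‖cx F‖) ?_ ?_ (integrable_const _) ?_
    · intro x
      exact ((cx F).continuous.comp (continuous_const.add continuous_pr)).aestronglyMeasurable
    · intro x
      exact Filter.Eventually.of_forall fun g => (cx F).norm_coe_le_norm _
    · exact Filter.Eventually.of_forall fun g => by fun_prop

lemma integrable_shift (F : C(UnitAddTorus (Fin d), ℝ)) (t : ℝ) (x : UnitAddTorus (Fin d)) :
    Integrable (fun g => cx F (x + pr g)) (gm d t) :=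
  (integrable_const ‖cx F‖).mono'
    ((cx F).continuous.comp (continuous_const.add continuous_pr)).aestronglyMeasurable
    (Filter.Eventually.of_forall fun g => (cx F).norm_coe_le_norm _)

lemma smooth_close (F : C(UnitAddTorus (Fin d), ℝ)) (hF : ∀ x y, F x - F y ≤ tc (x, y))
    {t : ℝ} (ht : 0 < t) (x : UnitAddTorus (Fin d)) :
    ‖cx F x - smooth F t x‖ ≤ √(2 * d * t) := by
  have h1 : cx F x - smooth F t x = ∫ g, (cx F x - cx F (x + pr g)) ∂(gm d t) := by
    rw [integral_sub (integrable_const _) (integrable_shift F t x), integral_const]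
    simp [smooth]
  rw [h1]
  refine (norm_integral_le_of_norm_le (gm_first ht).1 (Filter.Eventually.of_forall fun g => ?_)).trans
    (gm_first ht).2
  refine le_trans ?_ (tc_add_pr x g)
  change ‖((F x : ℝ) : ℂ) - ((F (x + pr g) : ℝ) : ℂ)‖ ≤ _
  rw [← Complex.ofReal_sub, Complex.norm_real, Real.norm_eq_abs, abs_le]
  have := hF (x + pr g) x
  rw [tc_symm] at this
  exact ⟨by linarith, hF _ _⟩

lemma smooth_coeff (F : C(UnitAddTorus (Fin d), ℝ)) {t : ℝ} (ht : 0 < t) (m : Fin d → ℤ) :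
    mFourierCoeff (smooth F t) m =
      mFourierCoeff (cx F) m * ((Real.exp (-t * ∑ i, (m i : ℝ) ^ 2) : ℝ) : ℂ) := by
  rw [← gm_char ht, ← integral_const_mul]
  have h1 : ∀ g, mFourierCoeff (cx F) m * mFourier m (pr g) =
      ∫ x, mFourier (-m) x • cx F (x + pr g) := by
    intro g
    rw [mul_comm, ← coeff_translate]; rfl
  simp_rw [h1]
  rw [integral_integral_swap]
  · unfold mFourierCoeff
    refine integral_congr_ae (Filter.Eventually.of_forall fun x => ?_)
    simp only [smul_eq_mul]
    rw [integral_const_mul]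
    rfl
  · refine (integrable_const ‖cx F‖).mono' ?_ (Filter.Eventually.of_forall fun p => ?_)
    · refine Continuous.aestronglyMeasurable ?_
      have := continuous_pr (d := d)
      simp only [Function.uncurry_def]
      fun_prop
    · simp only [Function.uncurry_def, norm_smul, mFourier_norm_pt, one_mul]
      exact (cx F).norm_coe_le_norm _

lemma coeff_le (F : C(UnitAddTorus (Fin d), ℂ)) (m : Fin d → ℤ) :
    ‖mFourierCoeff F m‖ ≤ ‖F‖ := by
  unfold mFourierCoeff
  refine (norm_integral_le_of_norm_le (integrable_const ‖F‖) (Filter.Eventually.of_forall fun x => ?_)).trans ?_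
  · rw [norm_smul, mFourier_norm_pt, one_mul]; exact F.norm_coe_le_norm _
  · simp

lemma summable_smooth (F : C(UnitAddTorus (Fin d), ℝ)) {t : ℝ} (ht : 0 < t) :
    Summable (fun m => ‖mFourierCoeff (smooth F t) m‖) := by
  refine Summable.of_nonneg_of_le (fun _ => norm_nonneg _) (fun m => ?_)
    ((summable_gauss ht d).mul_left ‖cx F‖)
  rw [smooth_coeff F ht, norm_mul, Complex.norm_real, Real.norm_of_nonneg (Real.exp_pos _).le]
  exact mul_le_mul_of_nonneg_right (coeff_le _ _) (Real.exp_pos _).le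

lemma fs_eq (μ : Measure (Fin d → ℝ)) (m : Fin d → ℤ) :
    fourierStieltjes μ m = ∫ x, mFourier m (pr x) ∂μ := by
  simp_rw [mFourier_pr]; rfl

lemma hasSum_smooth (F : C(UnitAddTorus (Fin d), ℝ)) {t : ℝ} (ht : 0 < t)
    (μ : Measure (Fin d → ℝ)) [IsProbabilityMeasure μ] :
    HasSum (fun m => mFourierCoeff (smooth F t) m * fourierStieltjes μ m)
      (∫ x, smooth F t (pr x) ∂μ) := by
  have hs := summable_smooth F ht
  have h1 : ∀ m : Fin d → ℤ, Integrable (fun x => mFourier m (pr x)) μ := fun m =>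
    (integrable_const (1 : ℝ)).mono'
      ((mFourier m).continuous.comp continuous_pr).aestronglyMeasurable
      (Filter.Eventually.of_forall fun x => (mFourier_norm_pt _ _).le)
  have h2 := hasSum_integral_of_summable_integral_norm (μ := μ)
    (F := fun m x => mFourierCoeff (smooth F t) m * mFourier m (pr x))
    (fun m => (h1 m).const_mul _) (by
      simp only [norm_mul, mFourier_norm_pt, mul_one, integral_const, probReal_univ, one_smul]
      exact hs)
  have h3 : ∀ m : Fin d → ℤ, ∫ x, mFourierCoeff (smooth F t) m * mFourier m (pr x) ∂μ =
      mFourierCoeff (smooth F t) m * fourierStieltjes μ m := fun m => by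
    rw [fs_eq]; exact integral_const_mul _ _
  simp only [h3] at h2
  have h4 : ∀ x, ∑' m, mFourierCoeff (smooth F t) m * mFourier m (pr x) = smooth F t (pr x) :=
    fun x => (hasSum_mFourier_series_apply_of_summable hs.of_norm (pr x)).tsum_eq
  simp only [h4] at h2
  exact h2

lemma fs_zero (μ : Measure (Fin d → ℝ)) [IsProbabilityMeasure μ] : fourierStieltjes μ 0 = 1 := by
  simp [fourierStieltjes]

/-- summand -/
def tm (μ ν : Measure (Fin d → ℝ)) (t : ℝ) (m : Fin d → ℤ) : ℝ :=
  (1 / ∑ i, ((m i : ℝ)) ^ 2) * Real.exp (-2 * (∑ i, ((m i : ℝ)) ^ 2) * t) *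
    ‖fourierStieltjes μ m - fourierStieltjes ν m‖ ^ 2

lemma tm_nonneg (μ ν : Measure (Fin d → ℝ)) (t : ℝ) (m : Fin d → ℤ) : 0 ≤ tm μ ν t m := by
  unfold tm; positivity

lemma sum_tm_le (μ ν : Measure (Fin d → ℝ)) [IsProbabilityMeasure μ] [IsProbabilityMeasure ν]
    (t : ℝ) (h : ∑' m : {m : Fin d → ℤ // m ≠ 0}, ENNReal.ofReal (tm μ ν t m) ≠ ⊤)
    (A : Finset (Fin d → ℤ)) :
    ∑ m ∈ A, tm μ ν t m ≤
      (∑' m : {m : Fin d → ℤ // m ≠ 0}, ENNReal.ofReal (tm μ ν t m)).toReal := by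
  rw [← ENNReal.ofReal_le_iff_le_toReal h, ENNReal.ofReal_sum_of_nonneg fun m _ => tm_nonneg _ _ _ _]
  refine (ENNReal.sum_le_tsum A).trans (le_of_eq ?_)
  refine Eq.trans ?_ (tsum_subtype {m : Fin d → ℤ | m ≠ 0}
    (fun m => ENNReal.ofReal (tm μ ν t m))).symm
  refine tsum_congr fun m => ?_
  by_cases hm : m = 0
  · subst hm
    simp [tm]
  · rw [Set.indicator_of_mem]; exact hm

lemma sum_bound (F : C(UnitAddTorus (Fin d), ℝ)) (hF : ∀ x y, F x - F y ≤ tc (x, y))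
    {t : ℝ} (ht : 0 < t)
    (μ ν : Measure (Fin d → ℝ)) [IsProbabilityMeasure μ] [IsProbabilityMeasure ν]
    (A : Finset (Fin d → ℤ)) (S : ℝ) (hS : ∑ m ∈ A, tm μ ν t m ≤ S) :
    ‖∑ m ∈ A, mFourierCoeff (smooth F t) m * (fourierStieltjes μ m - fourierStieltjes ν m)‖ ≤ √S := by
  refine (norm_sum_le _ _).trans ?_
  have hterm : ∀ m : Fin d → ℤ,
      ‖mFourierCoeff (smooth F t) m * (fourierStieltjes μ m - fourierStieltjes ν m)‖ =
      (√(∑ i, (m i : ℝ) ^ 2) * ‖mFourierCoeff (cx F) m‖) * √(tm μ ν t m) := by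
    intro m
    by_cases hm : m = 0
    · subst hm
      simp [fs_zero]
    · have hq : 0 < ∑ i, (m i : ℝ) ^ 2 := by
        obtain ⟨i, hi⟩ := Function.ne_iff.mp hm
        refine Finset.sum_pos' (fun i _ => sq_nonneg _) ⟨i, Finset.mem_univ _, ?_⟩
        have : (m i : ℝ) ≠ 0 := by exact_mod_cast hi
        positivity
      rw [smooth_coeff F ht, norm_mul, norm_mul, Complex.norm_real,
        Real.norm_of_nonneg (Real.exp_pos _).le]
      have h1 : tm μ ν t m = (Real.exp (-t * ∑ i, (m i : ℝ) ^ 2) *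
          ‖fourierStieltjes μ m - fourierStieltjes ν m‖) ^ 2 / ∑ i, (m i : ℝ) ^ 2 := by
        unfold tm
        rw [mul_pow, ← Real.exp_nat_mul, one_div]
        have : ((2 : ℕ) : ℝ) * (-t * ∑ i, (m i : ℝ) ^ 2) = -2 * (∑ i, ((m i : ℝ)) ^ 2) * t := by
          push_cast; ring
        rw [this]; field_simp
      rw [h1, Real.sqrt_div (sq_nonneg _), Real.sqrt_sq (by positivity)]
      have := Real.sqrt_pos.mpr hq
      field_simp
  simp_rw [hterm]
  refine (Real.sum_mul_le_sqrt_mul_sqrt A _ _).trans ?_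
  have h1 : √(∑ m ∈ A, (√(∑ i, (m i : ℝ) ^ 2) * ‖mFourierCoeff (cx F) m‖) ^ 2) ≤ 1 := by
    refine Real.sqrt_le_iff.mpr ⟨zero_le_one, ?_⟩
    rw [one_pow]
    refine le_trans (le_of_eq (Finset.sum_congr rfl fun m _ => ?_)) (energy F hF A)
    rw [mul_pow, Real.sq_sqrt (Finset.sum_nonneg fun i _ => sq_nonneg _)]
  have h2 : √(∑ m ∈ A, √(tm μ ν t m) ^ 2) ≤ √S := by
    refine Real.sqrt_le_sqrt (le_trans (le_of_eq (Finset.sum_congr rfl fun m _ => ?_)) hS)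
    rw [Real.sq_sqrt (tm_nonneg _ _ _ _)]
  exact (mul_le_mul h1 h2 (Real.sqrt_nonneg _) zero_le_one).trans (one_mul _).le

lemma integrable_pr (F : C(UnitAddTorus (Fin d), ℂ)) (μ : Measure (Fin d → ℝ))
    [IsProbabilityMeasure μ] : Integrable (fun x => F (pr x)) μ :=
  (integrable_const ‖F‖).mono' (F.continuous.comp continuous_pr).aestronglyMeasurable
    (Filter.Eventually.of_forall fun g => F.norm_coe_le_norm _)

lemma int_close (F : C(UnitAddTorus (Fin d), ℝ)) (hF : ∀ x y, F x - F y ≤ tc (x, y))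
    {t : ℝ} (ht : 0 < t) (μ : Measure (Fin d → ℝ)) [IsProbabilityMeasure μ] :
    ‖∫ x, cx F (pr x) ∂μ - ∫ x, smooth F t (pr x) ∂μ‖ ≤ √(2 * d * t) := by
  rw [← integral_sub (integrable_pr _ _) (integrable_pr _ _)]
  refine (norm_integral_le_of_norm_le (integrable_const (√(2 * d * t)))
    (Filter.Eventually.of_forall fun x => smooth_close F hF ht _)).trans ?_
  simp

lemma main_bound {t : ℝ} (ht : 0 < t)
    (μ ν : Measure (Fin d → ℝ)) [IsProbabilityMeasure μ] [IsProbabilityMeasure ν] (S : ℝ)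
    (hS : ∀ A : Finset (Fin d → ℤ), ∑ m ∈ A, tm μ ν t m ≤ S)
    (F : C(UnitAddTorus (Fin d), ℝ)) (hF : ∀ x y, F x - F y ≤ tc (x, y)) :
    ∫ x, F (pr x) ∂μ - ∫ x, F (pr x) ∂ν ≤ √S + 2 * √(2 * d * t) := by
  have h1 := (hasSum_smooth F ht μ).sub (hasSum_smooth F ht ν)
  simp_rw [← mul_sub] at h1
  have h2 : ‖∫ x, smooth F t (pr x) ∂μ - ∫ x, smooth F t (pr x) ∂ν‖ ≤ √S :=
    le_of_tendsto (Filter.Tendsto.norm h1)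
      (Filter.Eventually.of_forall fun A => sum_bound F hF ht μ ν A S (hS A))
  have h3 := int_close F hF ht μ
  have h4 := int_close F hF ht ν
  have h5 : ∀ κ : Measure (Fin d → ℝ), ((∫ x, F (pr x) ∂κ : ℝ) : ℂ) = ∫ x, cx F (pr x) ∂κ :=
    fun κ => integral_ofReal.symm
  have h6 : ∫ x, F (pr x) ∂μ - ∫ x, F (pr x) ∂ν ≤
      ‖∫ x, cx F (pr x) ∂μ - ∫ x, cx F (pr x) ∂ν‖ := by
    rw [← h5, ← h5, ← Complex.ofReal_sub, Complex.norm_real]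
    exact Real.le_norm_self _
  refine h6.trans ?_
  set a := ∫ x, cx F (pr x) ∂μ
  set b := ∫ x, cx F (pr x) ∂ν
  set a' := ∫ x, smooth F t (pr x) ∂μ
  set b' := ∫ x, smooth F t (pr x) ∂ν
  have h7 : a - b = (a - a') + (a' - b') - (b - b') := by ring
  rw [h7]
  have h8 := norm_sub_le ((a - a') + (a' - b')) (b - b')
  have h9 := norm_add_le (a - a') (a' - b')
  linarith

end Fourier

lemma rho_eq_of_half {d : ℕ} (x y : Fin d → ℝ) (hx : ∀ i, x i ∈ Set.Icc (0 : ℝ) π)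
    (hy : ∀ i, y i ∈ Set.Icc (0 : ℝ) π) : euclidDist x y = rhoTorus x y := by
  unfold euclidDist rhoTorus
  congr 1
  refine Finset.sum_congr rfl fun i _ => ?_
  have h1 := hx i
  have h2 := hy i
  have h3 : |x i - y i| ≤ π := abs_le.mpr ⟨by linarith [h1.1, h2.2], by linarith [h1.2, h2.1]⟩
  unfold rhoCircle
  rw [min_eq_left (by linarith), sq_abs]

lemma main_coupling {d : ℕ}
    (μ ν : Measure (Fin d → ℝ)) [IsProbabilityMeasure μ] [IsProbabilityMeasure ν]
    (hμ : μ (Qcube d)ᶜ = 0) (hν : ν (Qcube d)ᶜ = 0) {t : ℝ} (ht : 0 < t) :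
    ∃ γ : Measure ((Fin d → ℝ) × (Fin d → ℝ)), IsCoupling γ μ ν ∧
      ∫⁻ p, ENNReal.ofReal (rhoTorus p.1 p.2) ∂γ ≤
        (∑' m : {m : Fin d → ℤ // m ≠ 0}, ENNReal.ofReal (tm μ ν t m)) ^ (1/2 : ℝ)
          + ENNReal.ofReal (2 * Real.sqrt (2 * d * t)) := by
  by_cases h : ∑' m : {m : Fin d → ℤ // m ≠ 0}, ENNReal.ofReal (tm μ ν t m) = ⊤
  · refine ⟨μ.prod ν, ⟨?_, ?_⟩, ?_⟩
    · rw [← Measure.fst, Measure.fst_prod]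
    · rw [← Measure.snd, Measure.snd_prod]
    · rw [h, ENNReal.top_rpow_of_pos (by norm_num), top_add]; exact le_top
  · obtain ⟨γ, hγ, hle⟩ := exists_coupling_of_bound μ ν hμ hν _
      (fun F hF => main_bound ht μ ν _ (sum_tm_le μ ν t h) F hF)
    refine ⟨γ, hγ, hle.trans (le_of_eq ?_)⟩
    rw [ENNReal.ofReal_add (Real.sqrt_nonneg _) (by positivity)]
    congr 1
    rw [Real.sqrt_eq_rpow, ← ENNReal.ofReal_rpow_of_nonneg ENNReal.toReal_nonneg (by norm_num),
      ENNReal.ofReal_toReal h]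

/-- Proposition 2: a Fourier-analytic bound on `W̃₁(μ,ν)` after heat-kernel
smoothing, together with its version for `W₁` when `μ, ν` are supported on
`[0,π]^d`. -/
theorem W1tilde_le_fourier_smoothed {d : ℕ}
    (μ ν : Measure (Fin d → ℝ)) [IsProbabilityMeasure μ] [IsProbabilityMeasure ν]
    (hμ : μ (Qcube d)ᶜ = 0) (hν : ν (Qcube d)ᶜ = 0) {t : ℝ} (ht : 0 < t) :
    W1tilde μ ν ≤
        (∑' m : {m : Fin d → ℤ // m ≠ 0},
            ENNReal.ofReal
              ((1 / ∑ i, ((m.1 i : ℝ)) ^ 2) * Real.exp (-2 * (∑ i, ((m.1 i : ℝ)) ^ 2) * t) *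
                ‖fourierStieltjes μ m - fourierStieltjes ν m‖ ^ 2)) ^ (1/2 : ℝ)
          + ENNReal.ofReal (2 * Real.sqrt (2 * d * t)) ∧
      ((μ {x | ¬ ∀ i, x i ∈ Set.Icc (0 : ℝ) π} = 0) →
       (ν {x | ¬ ∀ i, x i ∈ Set.Icc (0 : ℝ) π} = 0) →
        W1 μ ν ≤
          (∑' m : {m : Fin d → ℤ // m ≠ 0},
              ENNReal.ofReal
                ((1 / ∑ i, ((m.1 i : ℝ)) ^ 2) * Real.exp (-2 * (∑ i, ((m.1 i : ℝ)) ^ 2) * t) *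
                  ‖fourierStieltjes μ m - fourierStieltjes ν m‖ ^ 2)) ^ (1/2 : ℝ)
            + ENNReal.ofReal (2 * Real.sqrt (2 * d * t))) := by
  obtain ⟨γ, hγ, hle⟩ := main_coupling μ ν hμ hν ht
  refine ⟨(iInf₂_le γ hγ).trans hle, fun h1 h2 => (iInf₂_le γ hγ).trans (le_trans (le_of_eq ?_) hle)⟩
  refine lintegral_congr_ae ?_
  have e1 : ∀ᵐ x ∂μ, ∀ i, x i ∈ Set.Icc (0 : ℝ) π := h1
  have e2 : ∀ᵐ x ∂ν, ∀ i, x i ∈ Set.Icc (0 : ℝ) π := h2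
  rw [← hγ.1] at e1
  rw [← hγ.2] at e2
  have f1 := ae_of_ae_map measurable_fst.aemeasurable e1
  have f2 := ae_of_ae_map measurable_snd.aemeasurable e2
  filter_upwards [f1, f2] with p p1 p2
  rw [rho_eq_of_half _ _ p1 p2]
end
end
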